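/- arXiv:1410.1579 — 2 statements merged into one kernel-verified Lean document; each statement's English description precedes it below -/
import Mathlib

section
/- There exists a constant C > 0 such that for every n ∈ ℕ and every plane straight-line graph G on a set of n points in ℝ², the number of x-monotone paths in G is at most C·αⁿ, where α is the unique real root of x³ − x² − x − 1 = 0. -/
open scoped BigOperators

noncomputable section

/-- Points of the plane. -/
abbrev Pt : Type := ℝ × ℝ

/-- Dot product on the plane. -/
def dotp (a b : Pt) : ℝ := a.1 * b.1 + a.2 * b.2

/-- The geometric conditions making `(V, E)` a plane straight-line graph:
every edge joins two distinct points of `V`, no point of `V` lies in the open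
segment of an edge, and the open segments of two distinct edges are disjoint. -/
def ValidEdges (V : Finset Pt) (E : Finset (Sym2 Pt)) : Prop :=
  (∀ a b : Pt, s(a, b) ∈ E → a ∈ V ∧ b ∈ V ∧ a ≠ b) ∧
  (∀ a b : Pt, s(a, b) ∈ E → ∀ v ∈ V, v ∉ openSegment ℝ a b) ∧
  (∀ a b c d : Pt, s(a, b) ∈ E → s(c, d) ∈ E → s(a, b) ≠ s(c, d) →
    openSegment ℝ a b ∩ openSegment ℝ c d = ∅)

/-- A plane straight-line graph. -/
structure PSLG where
  V : Finset Pt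
  E : Finset (Sym2 Pt)
  valid : ValidEdges V E

/-- A path in `G`: a sequence of at least two vertices, consecutive ones joined by edges. -/
def IsPathIn (G : PSLG) (L : List Pt) : Prop :=
  2 ≤ L.length ∧ L.Chain' (fun a b => s(a, b) ∈ G.E)

/-- An x-monotone path: x-coordinates strictly increasing along the path. -/
def IsXMonotonePath (G : PSLG) (L : List Pt) : Prop :=
  IsPathIn G L ∧ L.Chain' (fun a b => a.1 < b.1)

/-- Monotonicity of a vertex sequence in direction `u`. -/
def MonotoneInDir (u : Pt) (L : List Pt) : Prop :=
  L.Chain' (fun a b => 0 < dotp (b - a) u)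

/-- A monotone path: monotone in some direction `u ≠ 0`. -/
def IsMonotonePath (G : PSLG) (L : List Pt) : Prop :=
  IsPathIn G L ∧ ∃ u : Pt, u ≠ 0 ∧ MonotoneInDir u L

/-- The number of x-monotone paths in `G`. -/
def xMonCount (G : PSLG) : ℕ := Set.ncard {L : List Pt | IsXMonotonePath G L}

/-- The number of monotone paths in `G`, a path and its reversal counted once. -/
def monPathCount (G : PSLG) : ℕ :=
  Set.ncard {P : Set (List Pt) | ∃ L, IsMonotonePath G L ∧ P = {L, L.reverse}}

/-- Consecutive pairs along a cycle (including the wrap-around pair). -/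
def cyclePairs (L : List Pt) : List (Pt × Pt) := L.zip (L.rotate 1)

/-- A cycle in `G`: at least 3 pairwise distinct vertices, cyclically joined by edges. -/
def IsCycleIn (G : PSLG) (L : List Pt) : Prop :=
  3 ≤ L.length ∧ L.Nodup ∧ ∀ p ∈ cyclePairs L, s(p.1, p.2) ∈ G.E

/-- The union of the closed edge segments of a cycle. -/
def cycleBody (L : List Pt) : Set Pt := ⋃ p ∈ cyclePairs L, segment ℝ p.1 p.2

/-- A star-shaped polygon in `G`: a cycle for which some point `o` sees the boundary
in exactly one point along every ray emanating from `o`. -/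
def IsStarShapedPolygon (G : PSLG) (L : List Pt) : Prop :=
  IsCycleIn G L ∧ ∃ o : Pt, ∀ d : Pt, d ≠ 0 →
    ∃! p : Pt, p ∈ cycleBody L ∧ ∃ t : ℝ, 0 ≤ t ∧ p = o + t • d

/-- The edge set of a cycle, used to count polygons. -/
def cycleEdgeSet (L : List Pt) : Finset (Sym2 Pt) :=
  ((cyclePairs L).map (fun p => s(p.1, p.2))).toFinset

/-- The number of star-shaped polygons in `G`, counted by edge sets. -/
def starCount (G : PSLG) : ℕ :=
  Set.ncard {E' : Finset (Sym2 Pt) | ∃ L, IsStarShapedPolygon G L ∧ E' = cycleEdgeSet L}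

/-- Cross product (signed area). -/
def crossp (a b : Pt) : ℝ := a.1 * b.2 - a.2 * b.1

/-- A convex polygon in `G`: a cycle whose vertices are in strictly convex position and
appear along the cycle in their convex-hull cyclic order; equivalently, for every directed
edge of the cycle all other vertices lie strictly on the same (left or right) side. -/
def IsConvexPolygon (G : PSLG) (L : List Pt) : Prop :=
  IsCycleIn G L ∧
  ((∀ p ∈ cyclePairs L, ∀ v ∈ L, v ≠ p.1 → v ≠ p.2 → 0 < crossp (p.2 - p.1) (v - p.1)) ∨
   (∀ p ∈ cyclePairs L, ∀ v ∈ L, v ≠ p.1 → v ≠ p.2 → crossp (p.2 - p.1) (v - p.1) < 0))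

/-- The number of convex polygons in `G`, counted by edge sets. -/
def convexCount (G : PSLG) : ℕ :=
  Set.ncard {E' : Finset (Sym2 Pt) | ∃ L, IsConvexPolygon G L ∧ E' = cycleEdgeSet L}

/-- A triangulation: an edge-maximal plane straight-line graph. -/
def PSLG.IsTriangulation (G : PSLG) : Prop :=
  ∀ a ∈ G.V, ∀ b ∈ G.V, a ≠ b → s(a, b) ∉ G.E → ¬ ValidEdges G.V (insert s(a, b) G.E)

/-- An orientation of a PSLG: each edge `{a, b}` receives exactly one of the ordered
pairs `(a, b)`, `(b, a)`. -/
def IsOrientation (G : PSLG) (D : Finset (Pt × Pt)) : Prop :=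
  (∀ p ∈ D, s(p.1, p.2) ∈ G.E) ∧
  ∀ a b : Pt, s(a, b) ∈ G.E →
    (((a, b) ∈ D ∧ (b, a) ∉ D) ∨ ((b, a) ∈ D ∧ (a, b) ∉ D))

/-- A directed simple path in a directed graph on points. -/
def IsDirPath (D : Finset (Pt × Pt)) (L : List Pt) : Prop :=
  2 ≤ L.length ∧ L.Nodup ∧ L.Chain' (fun a b => (a, b) ∈ D)

/-- The number of directed simple paths. -/
def dirPathCount (D : Finset (Pt × Pt)) : ℕ := Set.ncard {L : List Pt | IsDirPath D L}

/-- No three of the points of `S` are collinear. -/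
def NoThreeCollinear (S : Finset Pt) : Prop :=
  ∀ p ∈ S, ∀ q ∈ S, ∀ r ∈ S, p ≠ q → p ≠ r → q ≠ r → ¬ Collinear ℝ ({p, q, r} : Set Pt)

/-- A maximal monotone path: not a proper subpath (up to reversal) of another
monotone path of `G`. -/
def IsMaximalMonotonePath (G : PSLG) (L : List Pt) : Prop :=
  IsMonotonePath G L ∧ ∀ M : List Pt, IsMonotonePath G M →
    (L <:+: M ∨ L.reverse <:+: M) → (L = M ∨ L.reverse = M)

/-- The sequence with initial values `1, 1, 2` whose `k`-th term is, for `3 ≤ k`, the sum of the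
`d k` preceding terms. -/
def windowSeq (d : ℕ → ℕ) : ℕ → ℕ
  | 0 => 1
  | 1 => 1
  | 2 => 2
  | k + 3 => ∑ i ∈ (Finset.Ico (k + 3 - d (k + 3)) (k + 3)).attach, windowSeq d i.1
termination_by k => k
decreasing_by exact (Finset.mem_Ico.1 i.2).2

theorem windowSeq_of_three_le (d : ℕ → ℕ) {k : ℕ} (hk : 3 ≤ k) :
    windowSeq d k = ∑ i ∈ Finset.Ico (k - d k) k, windowSeq d i := by
  obtain ⟨k, rfl⟩ := Nat.exists_eq_add_of_le' hk
  rw [windowSeq]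
  exact Finset.sum_attach _ (windowSeq d)

theorem windowSeq_of_eq_one {d : ℕ → ℕ} {k : ℕ} (h : d (k + 3) = 1) :
    windowSeq d (k + 3) = windowSeq d (k + 2) := by
  rw [windowSeq_of_three_le d (by omega), h]
  simp

theorem windowSeq_of_eq_two {d : ℕ → ℕ} {k : ℕ} (h : d (k + 3) = 2) :
    windowSeq d (k + 3) = windowSeq d (k + 2) + windowSeq d (k + 1) := by
  rw [windowSeq_of_three_le d (by omega), h, Finset.sum_Ico_succ_top (by omega),
    show k + 3 - 2 = k + 1 by omega]
  simp [add_comm]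

theorem windowSeq_of_eq_three {d : ℕ → ℕ} {k : ℕ} (h : d (k + 3) = 3) :
    windowSeq d (k + 3) = windowSeq d (k + 2) + windowSeq d (k + 1) + windowSeq d k := by
  rw [windowSeq_of_three_le d (by omega), h, Finset.sum_Ico_succ_top (by omega),
    Finset.sum_Ico_succ_top (by omega), show k + 3 - 3 = k by omega]
  simp
  ring

theorem windowSeq_congr {d d' : ℕ → ℕ} {n : ℕ} (h : ∀ k < n, d k = d' k) :
    ∀ k < n, windowSeq d k = windowSeq d' k := by
  intro k
  induction k using Nat.strong_induction_on with
  | _ k ih =>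
    intro hk
    by_cases h3 : 3 ≤ k
    · rw [windowSeq_of_three_le d h3, windowSeq_of_three_le d' h3, h k hk]
      refine Finset.sum_congr rfl fun i hi => ?_
      have := (Finset.mem_Ico.1 hi).2
      exact ih i this (by omega)
    · interval_cases k <;> simp [windowSeq]

/-- Increasing window lengths beyond `n` preserves domination of the first `n` terms. -/
theorem windowSeq_le_of_le {d d' : ℕ → ℕ} {n : ℕ}
    (h : ∀ k < n, windowSeq d k ≤ windowSeq d' k) (hd : ∀ k, n ≤ k → 3 ≤ k → d k ≤ d' k) (k : ℕ) :
    windowSeq d k ≤ windowSeq d' k := by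
  induction k using Nat.strong_induction_on with
  | _ k ih =>
    by_cases hk : k < n
    · exact h k hk
    by_cases h3 : 3 ≤ k
    · rw [windowSeq_of_three_le d h3, windowSeq_of_three_le d' h3]
      calc _ ≤ ∑ i ∈ Finset.Ico (k - d k) k, windowSeq d' i :=
            Finset.sum_le_sum fun i hi => ih i (Finset.mem_Ico.1 hi).2
        _ ≤ _ := Finset.sum_le_sum_of_subset (Finset.Ico_subset_Ico_left (by
            have := hd k (by omega) h3
            omega))
    · interval_cases k <;> simp [windowSeq]

theorem windowSeq_monotone {d : ℕ → ℕ} (hd : ∀ k, 3 ≤ k → 1 ≤ d k) : Monotone (windowSeq d) := by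
  refine monotone_nat_of_le_succ fun k => ?_
  by_cases h3 : 3 ≤ k + 1
  · rw [windowSeq_of_three_le d h3]
    have := hd _ h3
    exact Finset.single_le_sum (f := windowSeq d) (fun _ _ => Nat.zero_le _)
      (Finset.mem_Ico.2 ⟨by omega, by omega⟩)
  · have : k < 2 := by omega
    interval_cases k <;> simp [windowSeq]

theorem windowSeq_le_three_mul {d : ℕ → ℕ} (hd : ∀ k, 3 ≤ k → 1 ≤ d k) {k : ℕ}
    (h3 : 3 ≤ k + 1 → d (k + 1) ≤ 3) : windowSeq d (k + 1) ≤ 3 * windowSeq d k := by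
  by_cases h : 3 ≤ k + 1
  · rw [windowSeq_of_three_le d h]
    refine (Finset.sum_le_card_nsmul _ _ (windowSeq d k) fun i hi =>
      windowSeq_monotone hd (by have := (Finset.mem_Ico.1 hi).2; omega)).trans ?_
    simp only [Nat.card_Ico, smul_eq_mul]
    have := h3 h
    exact Nat.mul_le_mul_right _ (by omega)
  · have : k < 2 := by omega
    interval_cases k <;> simp [windowSeq]

theorem windowSeq_le_two_mul {d : ℕ → ℕ} {n : ℕ}
    (h : ∀ k, 3 ≤ k → k ≤ n → d k = 2 ∨ d k = 3) {k : ℕ} (hk : k + 1 ≤ n) :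
    windowSeq d (k + 1) ≤ 2 * windowSeq d k := by
  match k with
  | 0 => simp [windowSeq]
  | 1 => simp [windowSeq]
  | 2 =>
    have h0 : windowSeq d 0 = 1 := by simp [windowSeq]
    have h1 : windowSeq d 1 = 1 := by simp [windowSeq]
    have h2 : windowSeq d 2 = 2 := by simp [windowSeq]
    rcases h 3 le_rfl (by omega) with h | h
    · have : windowSeq d 3 = windowSeq d 2 + windowSeq d 1 := windowSeq_of_eq_two h
      change windowSeq d 3 ≤ _
      omega
    · have : windowSeq d 3 = windowSeq d 2 + windowSeq d 1 + windowSeq d 0 :=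
        windowSeq_of_eq_three h
      change windowSeq d 3 ≤ _
      omega
  | k + 3 =>
    have e1 : windowSeq d (k + 2) + windowSeq d (k + 1) ≤ windowSeq d (k + 3) := by
      rcases h (k + 3) (by omega) (by omega) with h | h
      · exact (windowSeq_of_eq_two h).ge
      · have := windowSeq_of_eq_three h; omega
    have e2 : windowSeq d (k + 4) ≤
        windowSeq d (k + 3) + windowSeq d (k + 2) + windowSeq d (k + 1) := by
      rcases h (k + 4) (by omega) (by omega) with h | h
      · have : windowSeq d (k + 4) = windowSeq d (k + 3) + windowSeq d (k + 2) :=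
          windowSeq_of_eq_two h
        omega
      · exact (windowSeq_of_eq_three (k := k + 1) h).le
    change windowSeq d (k + 4) ≤ _
    omega

theorem window_gain_of_two_or_three {f f' : ℕ → ℕ} {n j p : ℕ}
    (h0 : f' n = f n) (h1 : f' (n + 1) = f (n + 1))
    (hr : f (n + 1) ≤ 3 * f n) (h2 : f (n + 2) = f (n + 1))
    (h2' : f' (n + 2) = f' (n + 1) + f' n)
    (hrec : ∀ k, n ≤ k → k + 3 < j →
      (f (k + 3) = f (k + 2) + f (k + 1) ∧ f' (k + 3) = f' (k + 2) + f' (k + 1)) ∨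
      (f (k + 3) = f (k + 2) + f (k + 1) + f k ∧ f' (k + 3) = f' (k + 2) + f' (k + 1) + f' k))
    (hp : n < p) (hpj : p + 3 < j) :
    f p + f (p + 1) + f (p + 2) + f (p + 3) ≤ f' (p + 1) + f' (p + 2) + f' (p + 3) := by
  have inv : ∀ m, n + m + 4 < j → f (n + m + 1) ≤ f' (n + m + 1) ∧
      8 * f (n + m + 2) ≤ 7 * f' (n + m + 2) ∧ 8 * f (n + m + 3) ≤ 7 * f' (n + m + 3) ∧
      8 * f (n + m + 4) ≤ 7 * f' (n + m + 4) ∧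
      f' (n + m + 2) + f (n + m + 3) ≤ f' (n + m + 3) + f (n + m + 2) ∧
      f' (n + m + 3) + f (n + m + 4) ≤ f' (n + m + 4) + f (n + m + 3) ∧
      f' (n + m + 4) + 3 * f (n + m + 3) ≤ 3 * f' (n + m + 3) + f (n + m + 4) ∧
      f' (n + m + 3) + 3 * f (n + m + 2) ≤ 3 * f' (n + m + 2) + f (n + m + 3) := by
    intro m
    induction m with
    | zero =>
      intro hm
      have a := hrec n le_rfl (by omega)
      have b := hrec (n + 1) (by omega) (by omega)
      simp only [add_zero, add_assoc, Nat.reduceAdd] at *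
      omega
    | succ m ih =>
      intro hm
      have ih := ih (by omega)
      have b := hrec (n + m + 2) (by omega) (by omega)
      simp only [add_assoc, add_comm, add_left_comm, Nat.reduceAdd] at *
      omega
  rcases Nat.lt_or_ge p (n + 3) with h | h
  · have a := hrec n le_rfl (by omega)
    have b := hrec (n + 1) (by omega) (by omega)
    obtain rfl | rfl : p = n + 1 ∨ p = n + 2 := by omega
    · simp only [add_assoc, Nat.reduceAdd] at *
      omega
    · have c := hrec (n + 2) (by omega) (by omega)
      simp only [add_assoc, Nat.reduceAdd] at *
      omega
  · obtain ⟨m, rfl⟩ := Nat.exists_eq_add_of_le h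
    have ih := inv m (by omega)
    have b := hrec (n + m + 1) (by omega) (by omega)
    have c := hrec (n + m + 2) (by omega) (by omega)
    have e := hrec (n + m + 3) (by omega) (by omega)
    simp only [add_assoc, add_comm, add_left_comm, Nat.reduceAdd] at *
    omega

theorem window_gain_of_three {f f' : ℕ → ℕ} {n j p : ℕ}
    (h0 : f' n = f n) (h1 : f' (n + 1) = f (n + 1)) (h2 : f' (n + 2) = f (n + 2))
    (hr : f (n + 1) ≤ 2 * f n) (hr' : f (n + 2) ≤ 2 * f (n + 1))
    (h3 : f (n + 3) = f (n + 2) + f (n + 1))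
    (h3' : f' (n + 3) = f' (n + 2) + f' (n + 1) + f' n)
    (hrec : ∀ k, n < k → k + 3 < j →
      f (k + 3) = f (k + 2) + f (k + 1) + f k ∧ f' (k + 3) = f' (k + 2) + f' (k + 1) + f' k)
    (hp : n < p) (hpj : p + 3 < j) :
    f p + f (p + 1) + f (p + 2) + f (p + 3) ≤ f' (p + 1) + f' (p + 2) + f' (p + 3) := by
  induction p using Nat.strong_induction_on with
  | _ p ih =>
    rcases Nat.lt_or_ge p (n + 4) with h | h
    · have a := hrec (n + 1) (by omega)
      have b := hrec (n + 2) (by omega)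
      have c := hrec (n + 3) (by omega)
      obtain rfl | rfl | rfl : p = n + 1 ∨ p = n + 2 ∨ p = n + 3 := by omega
      all_goals
        simp only [add_assoc, Nat.reduceAdd] at *
        omega
    · obtain ⟨m, rfl⟩ := Nat.exists_eq_add_of_le h
      have i1 := ih (n + m + 1) (by omega) (by omega) (by omega)
      have i2 := ih (n + m + 2) (by omega) (by omega) (by omega)
      have i3 := ih (n + m + 3) (by omega) (by omega) (by omega)
      have a := hrec (n + m + 1) (by omega) (by omega)
      have b := hrec (n + m + 2) (by omega) (by omega)
      have c := hrec (n + m + 3) (by omega) (by omega)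
      have e := hrec (n + m + 4) (by omega) (by omega)
      simp only [add_assoc, add_comm, add_left_comm, Nat.reduceAdd] at *
      omega

theorem Nat.exists_last_lt {P : ℕ → Prop} {j : ℕ} (h : ∃ i < j, P i) :
    ∃ i < j, P i ∧ ∀ k, i < k → k < j → ¬ P k := by
  induction j with
  | zero => simp at h
  | succ j ih =>
    by_cases hj : P j
    · exact ⟨j, by omega, hj, fun k _ _ => by omega⟩
    · obtain ⟨i, hi, hPi⟩ := h
      obtain ⟨i, hij, hi, hlast⟩ := ih ⟨i, by grind, hPi⟩
      refine ⟨i, by omega, hi, fun k hik hkj => ?_⟩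
      rcases Nat.lt_succ_iff_lt_or_eq.1 hkj with h | rfl
      exacts [hlast k hik h, hj]

/-- Lengthen the window at `i` by one and shorten the window at `j` by one. -/
def shiftWindow (d : ℕ → ℕ) (i j : ℕ) : ℕ → ℕ :=
  Function.update (Function.update d i (d i + 1)) j (d j - 1)

theorem windowSeq_le_shiftWindow_of_lt {d : ℕ → ℕ} {i j : ℕ} :
    ∀ k < j, windowSeq d k ≤ windowSeq (shiftWindow d i j) k := by
  intro k hk
  have hcongr : windowSeq (Function.update d i (d i + 1)) k = windowSeq (shiftWindow d i j) k :=
    windowSeq_congr (n := j) (fun m hm => by simp [shiftWindow, hm.ne]) k hk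
  rw [← hcongr]
  refine windowSeq_le_of_le (n := 0) (by simp) (fun m _ _ => ?_) k
  by_cases h : m = i
  · simp [h]
  · simp [h]

theorem windowSeq_le_shiftWindow {d : ℕ → ℕ} {i j : ℕ} (h3 : 3 ≤ j) (hij : i < j)
    (hgain : ∀ p, d j + p = j → ∃ W ⊆ Finset.Ico (p + 1) j,
      windowSeq d p + ∑ k ∈ W, windowSeq d k ≤ ∑ k ∈ W, windowSeq (shiftWindow d i j) k) (k : ℕ) :
    windowSeq d k ≤ windowSeq (shiftWindow d i j) k := by
  refine windowSeq_le_of_le (n := j + 1) (fun k hk => ?_) (fun k hk _ => ?_) k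
  · rcases Nat.lt_succ_iff_lt_or_eq.1 hk with h | rfl
    · exact windowSeq_le_shiftWindow_of_lt k h
    rw [windowSeq_of_three_le d h3, windowSeq_of_three_le _ h3]
    have hk' : shiftWindow d i k k = d k - 1 := by simp [shiftWindow]
    rw [hk']
    have hle : ∀ s ⊆ Finset.range k, ∑ m ∈ s, windowSeq d m ≤
        ∑ m ∈ s, windowSeq (shiftWindow d i k) m := fun s hs =>
      Finset.sum_le_sum fun m hm => windowSeq_le_shiftWindow_of_lt m (by simpa using hs hm)
    rcases Nat.lt_or_ge k (d k) with h | h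
    · rw [show k - (d k - 1) = k - d k by omega]
      exact hle _ fun m hm => by simpa using (Finset.mem_Ico.1 hm).2
    rcases Nat.eq_zero_or_pos (d k) with h0 | h0
    · simp [h0]
    obtain ⟨W, hW, hgain⟩ := hgain (k - d k) (by omega)
    rw [show k - (d k - 1) = k - d k + 1 by omega, Finset.sum_eq_sum_Ico_succ_bot (by omega),
      ← Finset.sum_sdiff hW, ← Finset.sum_sdiff hW]
    have := hle (Finset.Ico (k - d k + 1) k \ W) fun m hm => by
      simpa using (Finset.mem_Ico.1 (Finset.mem_sdiff.1 hm).1).2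
    omega
  · by_cases h : k = i
    · omega
    · simp [shiftWindow, h, show k ≠ j by omega]

theorem exists_windowSeq_le_shiftWindow {d : ℕ → ℕ} {j : ℕ} (hd : ∀ k, 3 ≤ k → 1 ≤ d k)
    (h3 : 3 ≤ j) (hj : 4 ≤ d j) (hlt : ∀ k, 3 ≤ k → k < j → d k ≤ 3)
    (hex : ∃ i < j, 3 ≤ i ∧ d i ≤ 2) :
    ∃ i < j, 3 ≤ i ∧ d i ≤ 2 ∧ ∀ k, windowSeq d k ≤ windowSeq (shiftWindow d i j) k := by
  have hmono := windowSeq_monotone hd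
  have hbelow : ∀ i < j, ∀ k < i, windowSeq (shiftWindow d i j) k = windowSeq d k := by
    intro i hij k hk
    refine (windowSeq_congr (n := i) (fun m hm => ?_) k hk)
    simp [shiftWindow, hm.ne, (hm.trans hij).ne]
  by_cases hone : ∃ i < j, 3 ≤ i ∧ d i = 1
  · obtain ⟨i, hij, ⟨hi3, hi⟩, hlast⟩ := Nat.exists_last_lt hone
    obtain ⟨n, rfl⟩ := Nat.exists_eq_add_of_le' hi3
    refine ⟨n + 3, hij, hi3, by omega, windowSeq_le_shiftWindow h3 hij fun p hp => ?_⟩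
    have hi' : shiftWindow d (n + 3) j (n + 3) = 2 := by simp [shiftWindow, hij.ne, hi]
    have f2 := windowSeq_of_eq_one hi
    have f2' := windowSeq_of_eq_two hi'
    have hb1 := hbelow _ hij (n + 1) (by omega)
    have hb2 := hbelow _ hij (n + 2) (by omega)
    rcases Nat.lt_or_ge (n + 1) p with hnp | hnp
    · refine ⟨{p + 1, p + 2, p + 3}, ?_, ?_⟩
      · intro m hm
        simp only [Finset.mem_insert, Finset.mem_singleton] at hm
        simp only [Finset.mem_Ico]
        omega
      · have := window_gain_of_two_or_three (f := windowSeq d)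
          (f' := windowSeq (shiftWindow d (n + 3) j)) (n := n + 1) (j := j) (p := p) hb1 hb2
          (windowSeq_le_three_mul hd fun h => hlt _ h (by omega)) f2 f2'
          (fun k hk hkj => by
            have hk' : shiftWindow d (n + 3) j (k + 3) = d (k + 3) := by
              simp [shiftWindow, show k + 3 ≠ j by omega, show k ≠ n by omega]
            have h1 : d (k + 3) ≠ 1 := fun h => hlast (k + 3) (by omega) hkj ⟨by omega, h⟩
            have h2 := hlt (k + 3) (by omega) hkj
            have h4 := hd (k + 3) (by omega)
            obtain h | h : d (k + 3) = 2 ∨ d (k + 3) = 3 := by omega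
            · exact Or.inl ⟨windowSeq_of_eq_two h, windowSeq_of_eq_two (hk'.trans h)⟩
            · exact Or.inr ⟨windowSeq_of_eq_three h, windowSeq_of_eq_three (hk'.trans h)⟩)
          hnp (by omega)
        simp
        omega
    · refine ⟨{n + 3}, by simp; omega, ?_⟩
      have := hmono hnp
      simp
      omega
  · obtain ⟨i, hij, ⟨hi3, hi⟩, hlast⟩ := Nat.exists_last_lt hex
    obtain ⟨n, rfl⟩ := Nat.exists_eq_add_of_le' hi3
    have htwo : ∀ k, 3 ≤ k → k < j → d k = 2 ∨ d k = 3 := by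
      intro k hk hkj
      have h1 : d k ≠ 1 := fun h => hone ⟨k, hkj, hk, h⟩
      have h2 := hlt k hk hkj
      have h4 := hd k hk
      omega
    have hi2 : d (n + 3) = 2 := by have := htwo _ hi3 hij; omega
    refine ⟨n + 3, hij, hi3, by omega, windowSeq_le_shiftWindow h3 hij fun p hp => ?_⟩
    have hi' : shiftWindow d (n + 3) j (n + 3) = 3 := by simp [shiftWindow, hij.ne, hi2]
    have f3 := windowSeq_of_eq_two hi2
    have f3' := windowSeq_of_eq_three hi'
    have hb0 := hbelow _ hij n (by omega)
    have hb1 := hbelow _ hij (n + 1) (by omega)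
    have hb2 := hbelow _ hij (n + 2) (by omega)
    rcases Nat.lt_or_ge n p with hnp | hnp
    · refine ⟨{p + 1, p + 2, p + 3}, ?_, ?_⟩
      · intro m hm
        simp only [Finset.mem_insert, Finset.mem_singleton] at hm
        simp only [Finset.mem_Ico]
        omega
      · have := window_gain_of_three (f := windowSeq d)
          (f' := windowSeq (shiftWindow d (n + 3) j)) (n := n) (j := j) (p := p) hb0 hb1 hb2
          (windowSeq_le_two_mul (n := n + 3) (fun k h h' => htwo k h (by omega)) (by omega))
          (windowSeq_le_two_mul (n := n + 3) (fun k h h' => htwo k h (by omega)) (by omega)) f3 f3'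
          (fun k hk hkj => by
            have hk' : shiftWindow d (n + 3) j (k + 3) = d (k + 3) := by
              simp [shiftWindow, show k + 3 ≠ j by omega, show k ≠ n by omega]
            have h1 : ¬ d (k + 3) ≤ 2 := fun h => hlast (k + 3) (by omega) hkj ⟨by omega, h⟩
            have h : d (k + 3) = 3 := by have := htwo (k + 3) (by omega) hkj; omega
            exact ⟨windowSeq_of_eq_three h, windowSeq_of_eq_three (hk'.trans h)⟩)
          hnp (by omega)
        simp
        omega
    · refine ⟨{n + 3}, by simp; omega, ?_⟩
      have := hmono hnp
      simp
      omega

theorem windowSeq_le_tribonacci {d : ℕ → ℕ} (hd : ∀ k, 3 ≤ k → 1 ≤ d k) {n : ℕ}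
    (hsum : ∀ k, k ≤ n → ∑ i ∈ Finset.Ico 3 (k + 3), d i ≤ 3 * k) {m : ℕ} (hm : m < n + 3) :
    windowSeq d m ≤ windowSeq (fun _ => 3) m := by
  induction hN : ∑ i ∈ Finset.Ico 3 (n + 3), (d i - 3) using Nat.strong_induction_on
    generalizing d with
  | _ N ih =>
    by_cases hall : ∀ k, 3 ≤ k → k < n + 3 → d k ≤ 3
    · let d' := fun k => if k < n + 3 then d k else 3
      rw [windowSeq_congr (d' := d') (n := n + 3) (fun k hk => by simp [d', hk]) m hm]
      refine windowSeq_le_of_le (n := 0) (by simp) (fun k _ h3 => ?_) m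
      by_cases hk : k < n + 3
      · simpa [d', hk] using hall k h3 hk
      · simp [d', hk]
    · have hex : ∃ k, 3 ≤ k ∧ k < n + 3 ∧ 4 ≤ d k := by
        push Not at hall
        obtain ⟨k, h⟩ := hall
        exact ⟨k, h.1, h.2.1, h.2.2⟩
      classical
      obtain ⟨h3, hjn, hj⟩ := Nat.find_spec hex
      have hmin : ∀ k, 3 ≤ k → k < Nat.find hex → d k ≤ 3 := fun k hk hkj => by
        have := Nat.find_min hex hkj
        grind
      generalize Nat.find hex = j at *
      have hlow : ∃ i < j, 3 ≤ i ∧ d i ≤ 2 := by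
        by_contra! hcon
        obtain ⟨q, rfl⟩ := Nat.exists_eq_add_of_le' h3
        have h1 := hsum (q + 1) (by omega)
        rw [show q + 1 + 3 = (q + 3) + 1 by omega, Finset.sum_Ico_succ_top (by omega)] at h1
        have h2 := Finset.card_nsmul_le_sum (Finset.Ico 3 (q + 3)) d 3 fun i hi => by
          have := Finset.mem_Ico.1 hi
          exact hcon i this.2 this.1
        simp only [Nat.card_Ico, smul_eq_mul] at h2
        change _ ≤ ∑ k ∈ Finset.Ico 3 (q + 3), d k at h2
        omega
      obtain ⟨i, hij, hi3, hi, hle⟩ := exists_windowSeq_le_shiftWindow hd h3 hj hmin hlow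
      refine (hle m).trans (ih _ ?_ ?_ ?_ rfl)
      · rw [← hN]
        refine Finset.sum_lt_sum (fun k _ => ?_) ⟨j, by simp; omega, ?_⟩
        · by_cases hkj : k = j
          · simp [shiftWindow, hkj]; omega
          · by_cases hki : k = i
            · simp [shiftWindow, hki, hij.ne]; omega
            · simp [shiftWindow, hkj, hki]
        · simp [shiftWindow]; omega
      · intro k hk
        by_cases hkj : k = j
        · simp [shiftWindow, hkj]; omega
        · by_cases hki : k = i
          · simp [shiftWindow, hki, hij.ne]
          · simpa [shiftWindow, hkj, hki] using hd k hk
      · intro k hk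
        rcases Nat.lt_or_ge j (k + 3) with hjk | hjk
        · have heq : ∑ m ∈ Finset.Ico 3 (k + 3), (shiftWindow d i j m + if m = j then 1 else 0) =
              ∑ m ∈ Finset.Ico 3 (k + 3), (d m + if m = i then 1 else 0) := by
            refine Finset.sum_congr rfl fun m _ => ?_
            by_cases hmj : m = j
            · simp [shiftWindow, hmj, hij.ne']; omega
            · by_cases hmi : m = i
              · simp [shiftWindow, hmi, hij.ne]
              · simp [shiftWindow, hmj, hmi]
          rw [Finset.sum_add_distrib, Finset.sum_add_distrib, Finset.sum_ite_eq',
            Finset.sum_ite_eq', if_pos (by simp; omega), if_pos (by simp; omega)] at heq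
          have := hsum k hk
          omega
        · refine (Finset.sum_le_card_nsmul _ _ 3 fun m hm => ?_).trans (by simp; omega)
          obtain ⟨hm3, hmk⟩ := Finset.mem_Ico.1 hm
          have hmj : m ≠ j := by omega
          by_cases hmi : m = i
          · simp [shiftWindow, hmi, hij.ne]; omega
          · simpa [shiftWindow, hmi, hmj] using hmin m hm3 (by omega)

theorem windowSeq_three_le_pow {α : ℝ} (h1 : 1 < α) (hα : α ^ 3 = α ^ 2 + α + 1) (k : ℕ) :
    (windowSeq (fun _ => 3) k : ℝ) ≤ α ^ k := by
  induction k using Nat.strong_induction_on with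
  | _ k ih =>
    match k with
    | 0 => simp [windowSeq]
    | 1 => simpa [windowSeq] using h1.le
    | 2 =>
      simp only [windowSeq, Nat.cast_ofNat]
      nlinarith
    | k + 3 =>
      rw [windowSeq_of_eq_three rfl]
      push_cast
      have a := ih k (by omega)
      have b := ih (k + 1) (by omega)
      have c := ih (k + 2) (by omega)
      have : α ^ (k + 3) = α ^ (k + 2) + α ^ (k + 1) + α ^ k := by
        linear_combination α ^ k * hα
      linarith

theorem sum_le_sum_Ico_of_monotone {f : ℕ → ℕ} (hf : Monotone f) (k : ℕ) :
    ∀ s ⊆ Finset.range k, ∑ i ∈ s, f i ≤ ∑ i ∈ Finset.Ico (k - s.card) k, f i := by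
  induction k with
  | zero => intro s hs; simp at hs; simp [hs]
  | succ k ih =>
    intro s hs
    by_cases hk : k ∈ s
    · have hle : s.erase k ⊆ Finset.range k := fun i hi => by
        have := hs (Finset.mem_of_mem_erase hi)
        have := Finset.ne_of_mem_erase hi
        grind
      have hcard := Finset.card_pos.2 ⟨k, hk⟩
      have h := ih _ hle
      rw [Finset.card_erase_of_mem hk] at h
      rw [← Finset.sum_erase_add _ _ hk, Finset.sum_Ico_succ_top (by omega)]
      rw [show k - (s.card - 1) = k + 1 - s.card by omega] at h
      omega
    · have hle : s ⊆ Finset.range k := fun i hi => by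
        have := hs hi
        grind
      refine (ih s hle).trans ?_
      have hcard : s.card ≤ k := by simpa using Finset.card_le_card hle
      rcases Nat.eq_zero_or_pos s.card with h0 | h0
      · simp [h0]
      · rw [Finset.sum_Ico_succ_top (by omega), Finset.sum_eq_sum_Ico_succ_bot (by omega),
          show k - s.card + 1 = k + 1 - s.card by omega, add_comm]
        exact Nat.add_le_add_left (hf (by omega)) _

/-- A sparse acyclic graph on `ℕ` in which every positive vertex below `m` has a smaller
out-neighbour has path counts bounded by tribonacci numbers. -/
theorem exists_pathCount_bound {m : ℕ} {N : ℕ → Finset ℕ} (hN : ∀ k, N k ⊆ Finset.range k)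
    (hne : ∀ k < m, 0 < k → (N k).Nonempty)
    (hs : ∀ k < m, ∑ l ∈ Finset.range (k + 1), (N l).card ≤ 3 * (k + 1)) :
    ∃ B : ℕ → ℕ, (∀ k, 1 ≤ B k) ∧ (∀ k < m, 0 < k → ∑ l ∈ N k, B l ≤ B k) ∧
      ∀ k < m, B k ≤ windowSeq (fun _ => 3) (k + 5) := by
  let d : ℕ → ℕ := fun i => if 5 < i ∧ i < m + 5 then (N (i - 5)).card else 1
  have hd : ∀ k, 3 ≤ k → 1 ≤ d k := by
    intro k _
    by_cases h : 5 < k ∧ k < m + 5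
    · simpa [d, h] using hne (k - 5) (by omega) (by omega)
    · simp [d, h]
  have hd' : ∀ k < m, 0 < k → d (k + 5) = (N k).card := by
    intro k hk h0
    simp [d, hk, h0]
  have hmono := windowSeq_monotone hd
  refine ⟨fun k => windowSeq d (k + 5), fun k => ?_, fun k hk h0 => ?_, fun k hk => ?_⟩
  · simpa [windowSeq] using hmono (Nat.zero_le (k + 5))
  · beta_reduce
    rw [windowSeq_of_three_le d (by omega), hd' k hk h0]
    have := sum_le_sum_Ico_of_monotone hmono (k + 5) ((N k).map (addRightEmbedding 5))
      fun i hi => by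
        obtain ⟨l, hl, rfl⟩ := Finset.mem_map.1 hi
        have := hN k hl
        simp at this ⊢
        exact this
    simpa using this
  · refine windowSeq_le_tribonacci hd (n := m + 2) (fun K hK => ?_) (by omega)
    have hsmall : d 3 = 1 ∧ d 4 = 1 ∧ d 5 = 1 := by simp [d]
    have hsum : ∀ k < m, ∑ i ∈ Finset.Ico 3 (k + 6), d i ≤
        3 + ∑ l ∈ Finset.range (k + 1), (N l).card := by
      intro k
      induction k with
      | zero =>
        intro _
        simp [Finset.sum_Ico_succ_top, hsmall]
      | succ k ih =>
        intro hk
        rw [show k + 1 + 6 = k + 6 + 1 by omega, Finset.sum_Ico_succ_top (by omega),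
          Finset.sum_range_succ, show k + 6 = k + 1 + 5 by omega, hd' _ hk (by omega)]
        have := ih (by omega)
        rw [show k + 6 = k + 1 + 5 by omega] at this
        omega
    match K with
    | 0 => simp
    | 1 => simp [hsmall]
    | 2 => simp [Finset.sum_Ico_succ_top, hsmall]
    | K + 3 =>
      have h1 := hsum K (by omega)
      have h2 := hs K (by omega)
      change ∑ i ∈ Finset.Ico 3 (K + 6), d i ≤ _
      omega

theorem Finset.exists_enumeration_of_key {ι : Type*} (S : Finset ι) (hS : S.Nonempty)
    (key : ι → ℝ) : ∃ w : ℕ → ι, (∀ k < S.card, w k ∈ S) ∧ Set.InjOn w (Set.Iio S.card) ∧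
      (∀ z ∈ S, ∃ k < S.card, w k = z) ∧
      ∀ k < S.card, ∀ l < S.card, key (w l) < key (w k) → l < k := by
  let f : Fin S.card → ℝ := fun i => key (S.equivFin.symm i)
  let e : Fin S.card ≃ S := (Tuple.sort f).trans S.equivFin.symm
  have he : Monotone fun i => key (e i) := Tuple.monotone_sort f
  refine ⟨fun k => if h : k < S.card then e ⟨k, h⟩ else hS.choose, fun k hk => ?_,
    fun k hk l hl h => ?_, fun z hz => ⟨e.symm ⟨z, hz⟩, by simp, by simp⟩, fun k hk l hl h => ?_⟩
  · simp [hk]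
  · simp only [Set.mem_Iio] at hk hl
    simpa [hk, hl, Subtype.ext_iff] using h
  · simp only [hk, hl, dif_pos] at h
    by_contra! hkl
    exact absurd (he (show (⟨k, hk⟩ : Fin S.card) ≤ ⟨l, hl⟩ from hkl)) (not_le.2 h)

section Paths

variable {ι : Type*} {R : ι → ι → Prop} {x : ι → ℝ}

theorem List.IsChain.reflTransGen_of_getLast? {V : Finset ι} {b : ι} :
    ∀ {L : List ι} {a : ι}, (a :: L).IsChain R → (∀ v ∈ a :: L, v ∈ V) →
      (a :: L).getLast? = some b →
      Relation.ReflTransGen (fun y z => R y z ∧ y ∈ V ∧ z ∈ V) a b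
  | [], a, _, _, hb => by
    simp at hb
    rw [hb]
  | c :: L, a, hc, hV, hb => by
    rw [List.isChain_cons_cons] at hc
    rw [List.getLast?_cons_cons] at hb
    exact .head ⟨hc.1, hV a (by simp), hV c (by simp)⟩
      (hc.2.reflTransGen_of_getLast? (fun v hv => hV v (by simp [hv])) hb)

open Classical in
/-- In a sparse graph directed by increasing `x`, the paths with a fixed last vertex are bounded
by a sum of tribonacci numbers. -/
theorem exists_paths_to_vertex (hx : ∀ a b, R a b → x a < x b) {V : Finset ι}
    (hs : ∀ S ⊆ V, ((S ×ˢ S).filter fun p => R p.1 p.2).card ≤ 3 * S.card) {b : ι} (hb : b ∈ V) :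
    ∃ s : Finset (List ι), s.card ≤ ∑ k ∈ Finset.range V.card, windowSeq (fun _ => 3) (k + 5) ∧
      ∀ L : List ι, L.IsChain R → (∀ v ∈ L, v ∈ V) → L.getLast? = some b → L ∈ s := by
  let Rv : ι → ι → Prop := fun y z => R y z ∧ y ∈ V ∧ z ∈ V
  let V' := V.filter fun z => Relation.ReflTransGen Rv z b
  have hbV' : b ∈ V' := Finset.mem_filter.2 ⟨hb, .refl⟩
  obtain ⟨w, hwV, hinj, hsurj, hkey⟩ := V'.exists_enumeration_of_key ⟨b, hbV'⟩ fun z => -x z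
  have hlt : ∀ k < V'.card, ∀ l < V'.card, R (w k) (w l) → l < k := fun k hk l hl h =>
    hkey k hk l hl (neg_lt_neg (hx _ _ h))
  have hnext : ∀ k < V'.card, w k ≠ b → ∃ l < k, R (w k) (w l) := by
    intro k hk hkb
    obtain h | ⟨c, hc, hcb⟩ := (Finset.mem_filter.1 (hwV k hk)).2.cases_head
    · exact absurd h hkb
    · obtain ⟨l, hl, rfl⟩ := hsurj c (Finset.mem_filter.2 ⟨hc.2.2, hcb⟩)
      exact ⟨l, hlt k hk l hl hc.1, hc.1⟩
  have hpos : 0 < V'.card := Finset.card_pos.2 ⟨b, hbV'⟩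
  have hw0 : w 0 = b := by
    by_contra h
    obtain ⟨l, hl, _⟩ := hnext 0 hpos h
    omega
  let N : ℕ → Finset ℕ := fun k => (Finset.range k).filter fun l => R (w k) (w l)
  obtain ⟨B, hB1, hBsum, hBle⟩ := exists_pathCount_bound (m := V'.card) (N := N)
    (fun k => Finset.filter_subset _ _)
    (fun k hk h0 => by
      obtain ⟨l, hl, hR⟩ := hnext k hk fun h =>
        absurd (hinj hk hpos (h.trans hw0.symm)) h0.ne'
      exact ⟨l, by simp [N, hl, hR]⟩)
    (fun k hk => by
      have hinj' : Set.InjOn w (Finset.range (k + 1)) := hinj.mono fun i hi => by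
        simp at hi ⊢
        omega
      have h := hs ((Finset.range (k + 1)).image w) fun z hz => by
        obtain ⟨i, hi, rfl⟩ := Finset.mem_image.1 hz
        exact (Finset.mem_filter.1 (hwV i (by simp at hi; omega))).1
      rw [Finset.card_image_of_injOn hinj', Finset.card_range] at h
      refine le_trans ?_ h
      rw [← Finset.card_sigma]
      refine Finset.card_le_card_of_injOn (fun p => (w p.1, w p.2)) ?_ ?_
      · rintro ⟨i, l⟩ hil
        simp [N] at hil ⊢
        exact ⟨⟨⟨i, by omega, rfl⟩, ⟨l, by omega, rfl⟩⟩, hil.2.2⟩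
      · rintro ⟨i, l⟩ hil ⟨i', l'⟩ hil' heq
        simp [N] at hil hil' heq
        have h1 : i = i' := hinj' (by simp; omega) (by simp; omega) heq.1
        have h2 : l = l' := hinj' (by simp; omega) (by simp; omega) heq.2
        subst h1 h2
        rfl)
  have key : ∀ k < V'.card, ∃ s : Finset (List ι), s.card ≤ B k ∧
      ∀ L : List ι, (w k :: L).IsChain R → (∀ v ∈ w k :: L, v ∈ V) →
        (w k :: L).getLast? = some b → w k :: L ∈ s := by
    intro k
    induction k using Nat.strong_induction_on with
    | _ k ih =>
      intro hk
      have hstep : ∀ y L, (w k :: y :: L).IsChain R → (∀ v ∈ w k :: y :: L, v ∈ V) →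
          (w k :: y :: L).getLast? = some b → ∃ l ∈ N k, w l = y := by
        intro y L hc hV hlast
        rw [List.isChain_cons_cons] at hc
        rw [List.getLast?_cons_cons] at hlast
        obtain ⟨l, hl, rfl⟩ := hsurj y (Finset.mem_filter.2 ⟨hV y (by simp),
          hc.2.reflTransGen_of_getLast? (fun v hv => hV v (by simp [hv])) hlast⟩)
        exact ⟨l, by simpa [N, hc.1] using hlt k hk l hl hc.1, rfl⟩
      rcases Nat.eq_zero_or_pos k with rfl | h0
      · refine ⟨{[w 0]}, by simpa using hB1 0, fun L hc hV hlast => ?_⟩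
        cases L with
        | nil => simp
        | cons y L =>
          obtain ⟨l, hl, _⟩ := hstep y L hc hV hlast
          simp [N] at hl
      · choose! s hscard hsmem using ih
        have hNk : ∀ l ∈ N k, l < k := fun l hl => by simpa using (Finset.mem_filter.1 hl).1
        refine ⟨(N k).biUnion fun l => (s l).image (List.cons (w k)), ?_, fun L hc hV hlast => ?_⟩
        · refine Finset.card_biUnion_le.trans (le_trans (Finset.sum_le_sum fun l hl => ?_)
            (hBsum k hk h0))
          exact Finset.card_image_le.trans (hscard l (hNk l hl) ((hNk l hl).trans hk))
        · cases L with
          | nil =>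
            simp at hlast
            exact absurd (hinj hk hpos (hlast.trans hw0.symm)) h0.ne'
          | cons y L =>
            obtain ⟨l, hl, rfl⟩ := hstep y L hc hV hlast
            rw [List.isChain_cons_cons] at hc
            rw [List.getLast?_cons_cons] at hlast
            exact Finset.mem_biUnion.2 ⟨l, hl, Finset.mem_image_of_mem _ (hsmem l (hNk l hl)
              ((hNk l hl).trans hk) L hc.2 (fun v hv => hV v (List.mem_cons_of_mem _ hv)) hlast)⟩
  choose! s hscard hsmem using key
  refine ⟨(Finset.range V'.card).biUnion s, ?_, fun L hc hV hlast => ?_⟩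
  · refine Finset.card_biUnion_le.trans ?_
    refine (Finset.sum_le_sum fun k hk => (hscard k (by simpa using hk)).trans
      (hBle k (by simpa using hk))).trans ?_
    exact Finset.sum_le_sum_of_subset (Finset.range_mono (Finset.card_filter_le _ _))
  · cases L with
    | nil => simp at hlast
    | cons a L =>
      obtain ⟨k, hk, rfl⟩ := hsurj a (Finset.mem_filter.2 ⟨hV a (by simp),
        hc.reflTransGen_of_getLast? hV hlast⟩)
      exact Finset.mem_biUnion.2 ⟨k, by simpa using hk, hsmem k hk L hc hV hlast⟩

open Classical in
/-- A sparse graph directed by increasing `x` has `O(αⁿ)` paths. -/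
theorem exists_paths_of_sparse (hx : ∀ a b, R a b → x a < x b) {α : ℝ} (h1 : 1 < α)
    (hα : α ^ 3 = α ^ 2 + α + 1) (V : Finset ι)
    (hs : ∀ S ⊆ V, ((S ×ˢ S).filter fun p => R p.1 p.2).card ≤ 3 * S.card) :
    ∃ s : Finset (List ι), (s.card : ℝ) ≤ 192 * α ^ V.card ∧
      ∀ L : List ι, L ≠ [] → L.IsChain R → (∀ v ∈ L, v ∈ V) → L ∈ s := by
  have hlow : 3 / 2 ≤ α := by nlinarith [sq_nonneg α]
  have hupp : α ≤ 2 := by nlinarith [sq_nonneg α]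
  induction V using Finset.induction_on_max_value x with
  | empty =>
    refine ⟨∅, by simp, fun L hL _ hV => ?_⟩
    cases L with
    | nil => exact absurd rfl hL
    | cons a L => simpa using hV a
  | insert b V hbV hmax ih =>
    obtain ⟨s, hscard, hsmem⟩ := ih fun S hS => hs S (hS.trans (Finset.subset_insert _ _))
    obtain ⟨s', hscard', hsmem'⟩ := exists_paths_to_vertex hx hs (Finset.mem_insert_self b V)
    refine ⟨s ∪ s', ?_, fun L hL hc hV => ?_⟩
    · rw [Finset.card_insert_of_notMem hbV] at hscard' ⊢
      set n := V.card
      have hsum : (∑ k ∈ Finset.range (n + 1), windowSeq (fun _ => 3) (k + 5) : ℝ) ≤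
          64 * α ^ (n + 1) := by
        have h5 : α ^ 5 ≤ 32 := by
          calc α ^ 5 ≤ 2 ^ 5 := by gcongr
            _ = 32 := by norm_num
        have hg : ∑ k ∈ Finset.range (n + 1), α ^ k ≤ 2 * α ^ (n + 1) := by
          have := geom_sum_mul α (n + 1)
          have hnn : 0 ≤ ∑ k ∈ Finset.range (n + 1), α ^ k := by positivity
          nlinarith
        calc (∑ k ∈ Finset.range (n + 1), windowSeq (fun _ => 3) (k + 5) : ℝ)
            ≤ ∑ k ∈ Finset.range (n + 1), α ^ (k + 5) :=
              Finset.sum_le_sum fun k _ => windowSeq_three_le_pow h1 hα _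
          _ = α ^ 5 * ∑ k ∈ Finset.range (n + 1), α ^ k := by
              rw [Finset.mul_sum]
              exact Finset.sum_congr rfl fun k _ => by ring
          _ ≤ 32 * (2 * α ^ (n + 1)) := by gcongr
          _ = 64 * α ^ (n + 1) := by ring
      have hu : ((s ∪ s').card : ℝ) ≤ s.card + s'.card := by exact_mod_cast Finset.card_union_le _ _
      have hc' : (s'.card : ℝ) ≤ 64 * α ^ (n + 1) := le_trans (by exact_mod_cast hscard') hsum
      have hp : 0 < α ^ n := by positivity
      have : α ^ (n + 1) = α ^ n * α := pow_succ _ _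
      nlinarith
    · by_cases hbL : b ∈ L
      · refine Finset.mem_union_right _ (hsmem' L hc hV ?_)
        obtain ⟨l₁, l₂, rfl⟩ := List.append_of_mem hbL
        cases l₂ with
        | nil => simp
        | cons c l₂ =>
          have hR : R b c := (List.isChain_cons_cons.1 (List.isChain_append.1 hc).2.1).1
          have hlt := hx _ _ hR
          rcases Finset.mem_insert.1 (hV c (by simp)) with rfl | h
          · exact absurd hlt (lt_irrefl _)
          · exact absurd (hmax c h) (not_le.2 hlt)
      · refine Finset.mem_union_left _ (hsmem L hL hc fun v hv => ?_)
        rcases Finset.mem_insert.1 (hV v hv) with rfl | h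
        exacts [absurd hv hbL, h]

end Paths

section PlaneSegments

/-- The slope of the segment from `e.1` to `e.2`. -/
def segSlope (e : (ℝ × ℝ) × (ℝ × ℝ)) : ℝ := (e.2.2 - e.1.2) / (e.2.1 - e.1.1)

/-- The height above `x` of the line through `e.1` and `e.2`. -/
def heightAt (e : (ℝ × ℝ) × (ℝ × ℝ)) (x : ℝ) : ℝ := e.1.2 + segSlope e * (x - e.1.1)

/-- `D` is a set of segments between points of `S`, directed to the right, whose relative
interiors are pairwise disjoint and avoid `S`. -/
structure IsNoncrossing (S : Finset (ℝ × ℝ)) (D : Finset ((ℝ × ℝ) × (ℝ × ℝ))) : Prop where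
  fst_mem : ∀ e ∈ D, e.1 ∈ S
  snd_mem : ∀ e ∈ D, e.2 ∈ S
  lt : ∀ e ∈ D, e.1.1 < e.2.1
  height_ne : ∀ e ∈ D, ∀ v ∈ S, e.1.1 < v.1 → v.1 < e.2.1 → heightAt e v.1 ≠ v.2
  heights_ne : ∀ e ∈ D, ∀ f ∈ D, e ≠ f → ∀ x, e.1.1 < x → x < e.2.1 → f.1.1 < x → x < f.2.1 →
    heightAt e x ≠ heightAt f x

/-- `f` is the edge directly below `e` at their common left endpoint, and `w` is a leftmost point
of `S` in the wedge between `f` and `e`. -/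
structure IsWedgePoint (S : Finset (ℝ × ℝ)) (D : Finset ((ℝ × ℝ) × (ℝ × ℝ)))
    (e f : (ℝ × ℝ) × (ℝ × ℝ)) (w : ℝ × ℝ) : Prop where
  mem : f ∈ D
  fst_eq : f.1 = e.1
  slope_lt : segSlope f < segSlope e
  slope_le : ∀ g ∈ D, g.1 = e.1 → segSlope g < segSlope e → segSlope g ≤ segSlope f
  point_mem : w ∈ S
  left_lt : e.1.1 < w.1
  le_right : w.1 ≤ e.2.1
  le_right' : w.1 ≤ f.2.1
  height_le : heightAt f w.1 ≤ w.2
  le_height : w.2 ≤ heightAt e w.1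
  leftmost : ∀ v ∈ S, e.1.1 < v.1 → v.1 ≤ e.2.1 → v.1 ≤ f.2.1 → heightAt f v.1 ≤ v.2 →
    v.2 ≤ heightAt e v.1 → w.1 ≤ v.1

@[simp]
theorem heightAt_fst (e : (ℝ × ℝ) × (ℝ × ℝ)) : heightAt e e.1.1 = e.1.2 := by
  simp [heightAt]

theorem heightAt_snd {e : (ℝ × ℝ) × (ℝ × ℝ)} (h : e.1.1 < e.2.1) : heightAt e e.2.1 = e.2.2 := by
  rw [heightAt, segSlope, div_mul_cancel₀ _ (sub_pos.2 h).ne']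
  ring

theorem continuous_heightAt (e : (ℝ × ℝ) × (ℝ × ℝ)) : Continuous (heightAt e) := by
  unfold heightAt
  fun_prop

theorem heightAt_lt_heightAt_iff {e f : (ℝ × ℝ) × (ℝ × ℝ)} (h : f.1 = e.1) {x : ℝ}
    (hx : e.1.1 < x) : heightAt f x < heightAt e x ↔ segSlope f < segSlope e := by
  rw [heightAt, heightAt, h, add_lt_add_iff_left, mul_lt_mul_iff_left₀ (sub_pos.2 hx)]

theorem mk_heightAt_mem_openSegment {e : (ℝ × ℝ) × (ℝ × ℝ)} {x : ℝ} (h₁ : e.1.1 < x)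
    (h₂ : x < e.2.1) : (x, heightAt e x) ∈ openSegment ℝ e.1 e.2 := by
  have h : 0 < e.2.1 - e.1.1 := by linarith
  refine ⟨(e.2.1 - x) / (e.2.1 - e.1.1), (x - e.1.1) / (e.2.1 - e.1.1),
    div_pos (by linarith) h, div_pos (by linarith) h, ?_, ?_⟩
  · field_simp
    ring
  · ext
    · simp only [Prod.fst_add, Prod.smul_fst, smul_eq_mul]
      field_simp
      ring
    · simp only [Prod.snd_add, Prod.smul_snd, smul_eq_mul, heightAt, segSlope]
      field_simp
      ring

namespace IsNoncrossing

variable {S : Finset (ℝ × ℝ)} {D : Finset ((ℝ × ℝ) × (ℝ × ℝ))}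

theorem heightAt_le_heightAt (h : IsNoncrossing S D) {e f : (ℝ × ℝ) × (ℝ × ℝ)} (he : e ∈ D)
    (hf : f ∈ D) (hef : e ≠ f) {a b p q : ℝ} (hea : e.1.1 ≤ a) (hfa : f.1.1 ≤ a)
    (heb : b ≤ e.2.1) (hfb : b ≤ f.2.1) (hp : p ∈ Set.Ioo a b) (hq : q ∈ Set.Icc a b)
    (hlt : heightAt e p < heightAt f p) : heightAt e q ≤ heightAt f q := by
  by_contra! hgt
  obtain ⟨z, hz, hz0⟩ := intermediate_value_uIcc
    (((continuous_heightAt e).sub (continuous_heightAt f)).continuousOn (s := Set.uIcc p q))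
    (Set.mem_uIcc_of_le (sub_neg.2 hlt).le (sub_pos.2 hgt).le)
  have hz0 : heightAt e z = heightAt f z := sub_eq_zero.1 hz0
  have hzp : z ≠ p := by rintro rfl; linarith
  have hzq : z ≠ q := by rintro rfl; linarith
  have hzab : a < z ∧ z < b := by
    rcases Set.mem_uIcc.1 hz with hz | hz
    · exact ⟨hp.1.trans_le hz.1, (lt_of_le_of_ne hz.2 hzq).trans_le hq.2⟩
    · exact ⟨hq.1.trans_lt (lt_of_le_of_ne hz.1 hzq.symm), hz.2.trans_lt hp.2⟩
  exact h.heights_ne e he f hf hef z (by linarith) (by linarith) (by linarith) (by linarith)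
    hz0

theorem eq_of_segSlope_eq (h : IsNoncrossing S D) {e f : (ℝ × ℝ) × (ℝ × ℝ)} (he : e ∈ D)
    (hf : f ∈ D) (h₁ : e.1 = f.1) (hs : segSlope e = segSlope f) : e = f := by
  by_contra hef
  have hle := h.lt e he
  have hlf := h.lt f hf
  obtain ⟨x, hx, hx'⟩ := exists_between (lt_min hle (h₁ ▸ hlf))
  have := lt_min_iff.1 hx'
  exact h.heights_ne e he f hf hef x hx this.1 (h₁ ▸ hx) this.2 (by simp [heightAt, h₁, hs])

theorem exists_isWedgePoint (h : IsNoncrossing S D) {e : (ℝ × ℝ) × (ℝ × ℝ)} (he : e ∈ D)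
    (hlow : ∃ g ∈ D, g.1 = e.1 ∧ segSlope g < segSlope e) : ∃ f w, IsWedgePoint S D e f w := by
  classical
  obtain ⟨g, hg, hg₁, hgs⟩ := hlow
  obtain ⟨f, hf, hmax⟩ := (D.filter fun g => g.1 = e.1 ∧ segSlope g < segSlope e).exists_max_image
    segSlope ⟨g, by simp [hg, hg₁, hgs]⟩
  obtain ⟨hf, hf₁, hfs⟩ : f ∈ D ∧ f.1 = e.1 ∧ segSlope f < segSlope e := by simpa using hf
  have hle := h.lt e he
  have hlf := h.lt f hf
  have hne : (S.filter fun v => e.1.1 < v.1 ∧ v.1 ≤ e.2.1 ∧ v.1 ≤ f.2.1 ∧ heightAt f v.1 ≤ v.2 ∧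
      v.2 ≤ heightAt e v.1).Nonempty := by
    rcases le_total e.2.1 f.2.1 with hef | hef
    · refine ⟨e.2, Finset.mem_filter.2 ⟨h.snd_mem e he, hle, le_rfl, hef, ?_, ?_⟩⟩
      · rw [← heightAt_snd hle]
        exact ((heightAt_lt_heightAt_iff hf₁ hle).2 hfs).le
      · rw [heightAt_snd hle]
    · refine ⟨f.2, Finset.mem_filter.2 ⟨h.snd_mem f hf, hf₁ ▸ hlf, hef, le_rfl, ?_, ?_⟩⟩
      · rw [heightAt_snd hlf]
      · rw [← heightAt_snd hlf]
        exact ((heightAt_lt_heightAt_iff hf₁ (hf₁ ▸ hlf)).2 hfs).le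
  obtain ⟨w, hw, hmin⟩ := Finset.exists_min_image _ Prod.fst hne
  obtain ⟨hwS, h₁, h₂, h₃, h₄, h₅⟩ := Finset.mem_filter.1 hw
  exact ⟨f, w, hf, hf₁, hfs, fun g hg hg₁ hgs => hmax g (by simp [hg, hg₁, hgs]), hwS, h₁, h₂, h₃,
    h₄, h₅, fun v hv a b c d k => hmin v (Finset.mem_filter.2 ⟨hv, a, b, c, d, k⟩)⟩

theorem not_heightAt_lt_of_isWedgePoint (h : IsNoncrossing S D)
    {e e' f f' : (ℝ × ℝ) × (ℝ × ℝ)} {w : ℝ × ℝ} {p : ℝ} (he : e ∈ D) (he' : e' ∈ D)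
    (hw : IsWedgePoint S D e f w) (hw' : IsWedgePoint S D e' f' w)
    (hlt : heightAt f' w.1 < heightAt e w.1) (hp : p ∈ Set.Ioo (max e.1.1 e'.1.1) w.1) :
    ¬ heightAt e p < heightAt e' p := by
  intro hep
  have hee' : e ≠ e' := by rintro rfl; exact lt_irrefl _ hep
  have hef' : e ≠ f' := by rintro rfl; exact lt_irrefl _ hlt
  have hmax : max e.1.1 e'.1.1 < w.1 := hp.1.trans hp.2
  have hl := le_max_left e.1.1 e'.1.1
  have hr := le_max_right e.1.1 e'.1.1
  have hr' : f'.1.1 ≤ max e.1.1 e'.1.1 := hw'.fst_eq ▸ hr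
  have hupper : ∀ q ∈ Set.Icc (max e.1.1 e'.1.1) w.1, heightAt e q ≤ heightAt e' q := fun q hq =>
    h.heightAt_le_heightAt he he' hee' hl hr hw.le_right hw'.le_right hp hq hep
  have hfp : heightAt f' p < heightAt e p := by
    refine lt_of_le_of_ne (not_lt.1 fun hlt' => ?_) (h.heights_ne e he f' hw'.mem hef' p
      (hl.trans_lt hp.1) (hp.2.trans_le hw.le_right) (hr'.trans_lt hp.1)
      (hp.2.trans_le hw'.le_right')).symm
    exact hlt.not_ge (h.heightAt_le_heightAt he hw'.mem hef' hl hr' hw.le_right hw'.le_right' hp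
      ⟨hmax.le, le_rfl⟩ hlt')
  have hlower : ∀ q ∈ Set.Icc (max e.1.1 e'.1.1) w.1, heightAt f' q ≤ heightAt e q := fun q hq =>
    h.heightAt_le_heightAt hw'.mem he hef'.symm hr' hl hw'.le_right' hw.le_right hp hq hfp
  have hU := hupper _ ⟨le_rfl, hmax.le⟩
  have hL := hlower _ ⟨le_rfl, hmax.le⟩
  rcases lt_or_ge e'.1.1 e.1.1 with hcmp | hcmp
  · rw [max_eq_left hcmp.le] at hU hL hmax
    rw [heightAt_fst] at hU hL
    exact hmax.not_ge (hw'.leftmost e.1 (h.fst_mem e he) hcmp (hmax.le.trans hw'.le_right)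
      (hmax.le.trans hw'.le_right') hL hU)
  · rw [max_eq_right hcmp] at hU hL hmax
    rw [heightAt_fst] at hU
    rw [← hw'.fst_eq, heightAt_fst, hw'.fst_eq] at hL
    have heq := le_antisymm hU hL
    rcases hcmp.lt_or_eq with hcmp | hcmp
    · exact h.height_ne e he e'.1 (h.fst_mem e' he') hcmp (hmax.trans_le hw.le_right) heq
    · have h₁ : e.1 = e'.1 := Prod.ext hcmp (by rw [← heq, ← hcmp, heightAt_fst])
      have hpe : e'.1.1 < p := hr.trans_lt hp.1
      have hs := (heightAt_lt_heightAt_iff h₁ hpe).1 hep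
      have hs' := (heightAt_lt_heightAt_iff (hw'.fst_eq.trans h₁.symm) (h₁ ▸ hpe)).1 hfp
      exact hs'.not_ge (hw'.slope_le e he h₁ hs)

theorem eq_of_isWedgePoint (h : IsNoncrossing S D) {e e' f f' : (ℝ × ℝ) × (ℝ × ℝ)} {w : ℝ × ℝ}
    (he : e ∈ D) (he' : e' ∈ D) (hw : IsWedgePoint S D e f w) (hw' : IsWedgePoint S D e' f' w)
    (hiff : heightAt e w.1 = w.2 ↔ heightAt e' w.1 = w.2) : e = e' := by
  by_contra hne
  have hlt : heightAt f w.1 < heightAt e w.1 :=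
    (heightAt_lt_heightAt_iff hw.fst_eq hw.left_lt).2 hw.slope_lt
  have hlt' : heightAt f' w.1 < heightAt e' w.1 :=
    (heightAt_lt_heightAt_iff hw'.fst_eq hw'.left_lt).2 hw'.slope_lt
  obtain ⟨h₁, h₂⟩ : heightAt f' w.1 < heightAt e w.1 ∧ heightAt f w.1 < heightAt e' w.1 := by
    by_cases heq : heightAt e w.1 = w.2
    · rw [hiff.1 heq] at hlt' ⊢
      rw [heq] at hlt ⊢
      exact ⟨hlt', hlt⟩
    · exact ⟨hw'.height_le.trans_lt (lt_of_le_of_ne hw.le_height (Ne.symm heq)),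
        hw.height_le.trans_lt (lt_of_le_of_ne hw'.le_height (Ne.symm (mt hiff.2 heq)))⟩
  obtain ⟨p, hp⟩ := exists_between (max_lt hw.left_lt hw'.left_lt)
  have hpl := max_lt_iff.1 hp.1
  rcases lt_trichotomy (heightAt e p) (heightAt e' p) with hcmp | hcmp | hcmp
  · exact h.not_heightAt_lt_of_isWedgePoint he he' hw hw' h₁ hp hcmp
  · exact h.heights_ne e he e' he' hne p hpl.1 (hp.2.trans_le hw.le_right) hpl.2
      (hp.2.trans_le hw'.le_right) hcmp
  · exact h.not_heightAt_lt_of_isWedgePoint he' he hw' hw h₂ (max_comm e.1.1 e'.1.1 ▸ hp) hcmp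

theorem card_le (h : IsNoncrossing S D) : D.card ≤ 3 * S.card := by
  classical
  let P : (ℝ × ℝ) × (ℝ × ℝ) → Prop := fun e => ∃ g ∈ D, g.1 = e.1 ∧ segSlope g < segSlope e
  have hlow : (D.filter fun e => ¬ P e).card ≤ S.card := by
    refine Finset.card_le_card_of_injOn Prod.fst
      (fun e he => h.fst_mem e (Finset.mem_filter.1 he).1) fun e he e' he' h₁ => ?_
    obtain ⟨he, hP⟩ := Finset.mem_filter.1 he
    obtain ⟨he', hP'⟩ := Finset.mem_filter.1 he'
    exact h.eq_of_segSlope_eq he he' h₁ (le_antisymm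
      (not_lt.1 fun hs => hP ⟨e', he', h₁.symm, hs⟩) (not_lt.1 fun hs => hP' ⟨e, he, h₁, hs⟩))
  choose! f w hw using fun e (he : e ∈ D ∧ P e) => h.exists_isWedgePoint he.1 he.2
  have hhigh : (D.filter P).card ≤ (S ×ˢ (Finset.univ : Finset Bool)).card := by
    refine Finset.card_le_card_of_injOn (fun e => (w e, decide (heightAt e (w e).1 = (w e).2)))
      (fun e he => ?_) fun e he e' he' heq => ?_
    · exact Finset.mem_product.2
        ⟨(hw e (Finset.mem_filter.1 he)).point_mem, Finset.mem_univ _⟩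
    · obtain ⟨h₁, h₂⟩ := Prod.ext_iff.1 heq
      have he := Finset.mem_filter.1 he
      have he' := Finset.mem_filter.1 he'
      simp only [decide_eq_decide] at h₁ h₂
      have hwe' := hw e' he'
      rw [← h₁] at hwe' h₂
      exact h.eq_of_isWedgePoint he.1 he'.1 (hw e he) hwe' h₂
  have hsum := Finset.card_filter_add_card_filter_not (s := D) P
  simp only [Finset.card_product, Finset.card_univ, Fintype.card_bool] at hhigh
  omega

end IsNoncrossing

end PlaneSegments

open Classical in
/-- The left-to-right directed edges of `G` between points of `S` are noncrossing segments. -/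
theorem PSLG.isNoncrossing (G : PSLG) {S : Finset Pt} (hS : S ⊆ G.V) :
    IsNoncrossing S ((S ×ˢ S).filter fun p => s(p.1, p.2) ∈ G.E ∧ p.1.1 < p.2.1) := by
  obtain ⟨-, hopen, hdisj⟩ := G.valid
  constructor
  · intro e he
    exact (Finset.mem_product.1 (Finset.mem_filter.1 he).1).1
  · intro e he
    exact (Finset.mem_product.1 (Finset.mem_filter.1 he).1).2
  · intro e he
    exact (Finset.mem_filter.1 he).2.2
  · intro e he v hv h₁ h₂ heq
    refine hopen e.1 e.2 (Finset.mem_filter.1 he).2.1 v (hS hv) ?_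
    have := mk_heightAt_mem_openSegment h₁ h₂
    rwa [heq] at this
  · intro e he f hf hef x h₁ h₂ h₃ h₄ heq
    obtain ⟨-, heE, helt⟩ := Finset.mem_filter.1 he
    obtain ⟨-, hfE, hflt⟩ := Finset.mem_filter.1 hf
    have hne : s(e.1, e.2) ≠ s(f.1, f.2) := by
      intro h
      rcases Sym2.eq_iff.1 h with ⟨h, h'⟩ | ⟨h, h'⟩
      · exact hef (Prod.ext h h')
      · rw [h, h'] at helt
        exact lt_asymm helt hflt
    have hmem : (x, heightAt e x) ∈ openSegment ℝ e.1 e.2 ∩ openSegment ℝ f.1 f.2 :=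
      ⟨mk_heightAt_mem_openSegment h₁ h₂, heq ▸ mk_heightAt_mem_openSegment h₃ h₄⟩
    rwa [hdisj _ _ _ _ heE hfE hne] at hmem

theorem IsXMonotonePath.isChain {G : PSLG} {L : List Pt} (h : IsXMonotonePath G L) :
    L.IsChain fun a b => s(a, b) ∈ G.E ∧ a.1 < b.1 := by
  obtain ⟨⟨-, h₁⟩, h₂⟩ := h
  exact List.isChain_iff_getElem.2 fun i hi =>
    ⟨List.isChain_iff_getElem.1 h₁ i hi, List.isChain_iff_getElem.1 h₂ i hi⟩

theorem IsPathIn.mem_V {G : PSLG} {L : List Pt} (h : IsPathIn G L) {v : Pt} (hv : v ∈ L) :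
    v ∈ G.V := by
  obtain ⟨hlen, hc⟩ := h
  obtain ⟨i, hi, rfl⟩ := List.mem_iff_getElem.1 hv
  cases i with
  | zero => exact (G.valid.1 _ _ (List.isChain_iff_getElem.1 hc 0 (by omega))).1
  | succ i => exact (G.valid.1 _ _ (List.isChain_iff_getElem.1 hc i hi)).2.1

/-- every PSLG on `n` points has at most `C·αⁿ` x-monotone paths,
where `α` is the unique real root of `x³ − x² − x − 1 = 0`. -/
theorem xMonotone_upper_bound :
    ∃ C : ℝ, 0 < C ∧ ∀ α : ℝ, 1 < α → α ^ 3 = α ^ 2 + α + 1 →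
      ∀ (n : ℕ) (G : PSLG), G.V.card = n →
        (xMonCount G : ℝ) ≤ C * α ^ n := by
  refine ⟨192, by norm_num, fun α h1 hα n G hn => ?_⟩
  subst hn
  obtain ⟨s, hs, hmem⟩ := exists_paths_of_sparse
    (R := fun a b : Pt => s(a, b) ∈ G.E ∧ a.1 < b.1) (x := Prod.fst) (fun _ _ h => h.2) h1 hα G.V
    fun S hS => by convert (G.isNoncrossing hS).card_le
  have hsub : {L : List Pt | IsXMonotonePath G L} ⊆ ↑s := fun L hL =>
    hmem L (List.ne_nil_of_length_pos (by have := hL.1.1; omega)) hL.isChain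
      fun v hv => hL.1.mem_V hv
  refine le_trans ?_ hs
  rw [xMonCount, ← Set.ncard_coe_finset]
  exact_mod_cast Set.ncard_le_ncard hsub s.finite_toSet

end
end

section
/- There exists a constant C > 0 such that for every n ∈ ℕ and every plane straight-line graph G on a set of n points in ℝ², the number of monotone paths in G (monotone in some direction, over all directions, a path and its reversal counted once) is at most C·n·αⁿ, where α is the unique real root of x³ − x² − x − 1 = 0. -/
open scoped BigOperators

noncomputable section

/-- A straight-line drawing on vertices with distinct abscissas: `E a b` is an edge directed from
left to right, no vertex lies on an edge, and distinct edges do not cross. -/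
structure XDrawing (ι : Type*) where
  V : Finset ι
  X : ι → ℝ
  Y : ι → ℝ
  E : ι → ι → Prop
  mem_left : ∀ {a b}, E a b → a ∈ V
  mem_right : ∀ {a b}, E a b → b ∈ V
  lt : ∀ {a b}, E a b → X a < X b
  inj : ∀ {a b}, a ∈ V → b ∈ V → X a = X b → a = b
  avoid : ∀ {a b v}, E a b → v ∈ V → X a < X v → X v < X b →
    Y v ≠ Y a + (Y b - Y a) / (X b - X a) * (X v - X a)
  disj : ∀ {a b c d} (x : ℝ), E a b → E c d → X a < x → x < X b → X c < x → x < X d →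
    Y a + (Y b - Y a) / (X b - X a) * (x - X a) = Y c + (Y d - Y c) / (X d - X c) * (x - X c) →
    a = c ∧ b = d

namespace XDrawing

variable {ι : Type*} (D : XDrawing ι)

/-- The slope of the line through two vertices. -/
def slope (a b : ι) : ℝ := (D.Y b - D.Y a) / (D.X b - D.X a)

/-- The ordinate at abscissa `x` of the line through two vertices. -/
def height (a b : ι) (x : ℝ) : ℝ := D.Y a + D.slope a b * (x - D.X a)

variable {D}

lemma height_left (a b : ι) : D.height a b (D.X a) = D.Y a := by simp [height]

lemma height_right {a b : ι} (h : D.X a < D.X b) : D.height a b (D.X b) = D.Y b := by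
  have : D.X b - D.X a ≠ 0 := by linarith
  simp only [height, slope]
  field_simp
  ring

lemma height_lt_iff {a b v : ι} (h : D.X a < D.X v) :
    D.height a b (D.X v) < D.Y v ↔ D.slope a b < D.slope a v := by
  rw [← height_right h]
  simp only [height, add_lt_add_iff_left]
  exact mul_lt_mul_iff_left₀ (by linarith)

lemma lt_height_iff {a b v : ι} (h : D.X a < D.X v) :
    D.Y v < D.height a b (D.X v) ↔ D.slope a v < D.slope a b := by
  rw [← height_right h]
  simp only [height, add_lt_add_iff_left]
  exact mul_lt_mul_iff_left₀ (by linarith)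

lemma height_ne {a b v : ι} (h : D.E a b) (hv : v ∈ D.V) (h1 : D.X a < D.X v)
    (h2 : D.X v < D.X b) : D.Y v ≠ D.height a b (D.X v) := D.avoid h hv h1 h2

/-- Two edges that swap their vertical order over their common range coincide. -/
lemma eq_of_swap {a b c d : ι} (h : D.E a b) (h' : D.E c d) {x y : ℝ} (hxy : x < y)
    (ha : D.X a ≤ x) (hb : y ≤ D.X b) (hc : D.X c ≤ x) (hd : y ≤ D.X d)
    (hx : D.height a b x < D.height c d x) (hy : D.height c d y < D.height a b y) :
    a = c ∧ b = d := by
  have hcont : ContinuousOn (fun z => D.height a b z - D.height c d z) (Set.Icc x y) := by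
    unfold height
    fun_prop
  obtain ⟨z, ⟨hz1, hz2⟩, hz⟩ := intermediate_value_Ioo hxy.le hcont
    (show (0 : ℝ) ∈ Set.Ioo _ _ from ⟨by linarith, by linarith⟩)
  exact D.disj z h h' (by linarith) (by linarith) (by linarith) (by linarith) (sub_eq_zero.mp hz)

lemma eq_of_slope_eq {a b c : ι} (h : D.E a b) (h' : D.E a c)
    (hs : D.slope a b = D.slope a c) : b = c := by
  obtain ⟨x, hx, hx'⟩ := exists_between (lt_min (D.lt h) (D.lt h'))
  have := lt_min_iff.mp hx'
  exact (D.disj x h h' hx this.1 hx this.2 (by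
    change D.Y a + D.slope a b * _ = D.Y a + D.slope a c * _
    rw [hs])).2

/-- `c` is the next neighbour above `b` to the right of `a`, and `m` is the leftmost vertex
right of `a` in the wedge between `ab` and `ac`. -/
structure IsWedge (D : XDrawing ι) (a b c m : ι) : Prop where
  lower : D.E a b
  upper : D.E a c
  slope_lt : D.slope a b < D.slope a c
  next : ∀ d, D.E a d → D.slope a b < D.slope a d → D.slope a c ≤ D.slope a d
  mem : m ∈ D.V
  lt : D.X a < D.X m
  le_slope : D.slope a b ≤ D.slope a m
  slope_le : D.slope a m ≤ D.slope a c
  leftmost : ∀ w ∈ D.V, D.X a < D.X w → D.slope a b ≤ D.slope a w → D.slope a w ≤ D.slope a c →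
    D.X m ≤ D.X w

lemma exists_isWedge {a b d : ι} (h : D.E a b) (hd : D.E a d)
    (hs : D.slope a b < D.slope a d) : ∃ c m, IsWedge D a b c m := by
  classical
  obtain ⟨c, hc, hmin⟩ := (D.V.filter fun c => D.E a c ∧ D.slope a b < D.slope a c).exists_min_image
    (D.slope a) ⟨d, by simp [hd, hs, D.mem_right hd]⟩
  obtain ⟨m, hm, hmin'⟩ := (D.V.filter fun w => D.X a < D.X w ∧ D.slope a b ≤ D.slope a w ∧
    D.slope a w ≤ D.slope a c).exists_min_image D.X
    ⟨c, by
      simp only [Finset.mem_filter] at hc ⊢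
      exact ⟨hc.1, D.lt hc.2.1, hc.2.2.le, le_rfl⟩⟩
  simp only [Finset.mem_filter] at hc hmin hm hmin'
  exact ⟨c, m, h, hc.2.1, hc.2.2, fun d hd hs => hmin d ⟨D.mem_right hd, hd, hs⟩, hm.1, hm.2.1,
    hm.2.2.1, hm.2.2.2, fun w hw h1 h2 h3 => hmin' w ⟨hw, h1, h2, h3⟩⟩

namespace IsWedge

variable {a b c m a' b' c' : ι}

lemma le_lower (h : IsWedge D a b c m) : D.X m ≤ D.X b :=
  h.leftmost b (D.mem_right h.lower) (D.lt h.lower) le_rfl h.slope_lt.le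

lemma le_upper (h : IsWedge D a b c m) : D.X m ≤ D.X c :=
  h.leftmost c (D.mem_right h.upper) (D.lt h.upper) h.slope_lt.le le_rfl

lemma lower_le (h : IsWedge D a b c m) : D.height a b (D.X m) ≤ D.Y m :=
  not_lt.mp fun h' => absurd ((lt_height_iff h.lt).mp h') h.le_slope.not_gt

lemma le_height_upper (h : IsWedge D a b c m) : D.Y m ≤ D.height a c (D.X m) :=
  not_lt.mp fun h' => absurd ((height_lt_iff h.lt).mp h') h.slope_le.not_gt

lemma lower_lt (h : IsWedge D a b c m) (hm : m ≠ b) : D.height a b (D.X m) < D.Y m := by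
  refine lt_of_le_of_ne h.lower_le (height_ne h.lower h.mem h.lt ?_).symm
  exact lt_of_le_of_ne h.le_lower fun e => hm (D.inj h.mem (D.mem_right h.lower) e)

/-- A vertex strictly between `a` and `m` lies outside the wedge. -/
lemma outside (h : IsWedge D a b c m) {w : ι} (hw : w ∈ D.V) (h1 : D.X a < D.X w)
    (h2 : D.X w < D.X m) :
    D.Y w < D.height a b (D.X w) ∨ D.height a c (D.X w) < D.Y w := by
  by_contra! hcon
  have h3 : D.slope a b ≤ D.slope a w :=
    not_lt.mp fun h' => absurd ((lt_height_iff h1).mpr h') hcon.1.not_gt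
  have h4 : D.slope a w ≤ D.slope a c :=
    not_lt.mp fun h' => absurd ((height_lt_iff h1).mpr h') hcon.2.not_gt
  exact absurd (h.leftmost w hw h1 h3 h4) h2.not_ge

lemma not_lt_of_ne (h : IsWedge D a b c m) (h' : IsWedge D a' b' c' m) (hm : m ≠ b)
    (hm' : m ≠ b') : ¬ D.X a < D.X a' := by
  intro hlt
  have hne : a ≠ a' := fun e => hlt.ne (by rw [e])
  have hb := h.lower_lt hm
  have hb' := h'.lower_lt hm'
  have hc := h.le_height_upper
  have hc' := h'.le_height_upper
  rcases h.outside (D.mem_left h'.lower) hlt h'.lt with h1 | h1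
  · exact hne (eq_of_swap h'.upper h.lower h'.lt le_rfl h'.le_upper hlt.le h.le_lower
      (by rwa [height_left]) (by linarith)).1.symm
  · exact hne (eq_of_swap h.upper h'.lower h'.lt hlt.le h.le_upper le_rfl h'.le_lower
      (by rwa [height_left]) (by linarith)).1

lemma not_lt_of_eq (h : IsWedge D a m c m) (h' : IsWedge D a' m c' m) : ¬ D.X a < D.X a' := by
  intro hlt
  have hne : a ≠ a' := fun e => hlt.ne (by rw [e])
  have hc := (lt_height_iff h.lt).mpr h.slope_lt
  have hc' := (lt_height_iff h'.lt).mpr h'.slope_lt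
  rcases h.outside (D.mem_left h'.lower) hlt h'.lt with h1 | h1
  · exact hne (eq_of_swap h'.upper h.lower h'.lt le_rfl h'.le_upper hlt.le h.le_lower
      (by rwa [height_left]) (by rwa [height_right h.lt])).1.symm
  · exact hne (eq_of_swap h.upper h'.lower h'.lt hlt.le h.le_upper le_rfl h'.le_lower
      (by rwa [height_left]) (by rwa [height_right h'.lt])).1

lemma not_slope_lt (h : IsWedge D a b c m) (h' : IsWedge D a b' c' m) (hm' : m ≠ b') :
    ¬ D.slope a b < D.slope a b' := by
  intro hlt
  have h1 := h.next b' h'.lower hlt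
  have h2 := (height_lt_iff h'.lt).mp (h'.lower_lt hm')
  have h3 := h.slope_le
  linarith

lemma eq_of_ne (h : IsWedge D a b c m) (h' : IsWedge D a' b' c' m) (hm : m ≠ b)
    (hm' : m ≠ b') : a = a' ∧ b = b' := by
  obtain rfl : a = a' := D.inj (D.mem_left h.lower) (D.mem_left h'.lower)
    (le_antisymm (not_lt.mp (h'.not_lt_of_ne h hm' hm)) (not_lt.mp (h.not_lt_of_ne h' hm hm')))
  exact ⟨rfl, eq_of_slope_eq h.lower h'.lower
    (le_antisymm (not_lt.mp (h'.not_slope_lt h hm)) (not_lt.mp (h.not_slope_lt h' hm')))⟩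

lemma eq_of_eq (h : IsWedge D a m c m) (h' : IsWedge D a' m c' m) : a = a' :=
  D.inj (D.mem_left h.lower) (D.mem_left h'.lower)
    (le_antisymm (not_lt.mp (h'.not_lt_of_eq h)) (not_lt.mp (h.not_lt_of_eq h')))

end IsWedge

/-- A plane straight-line drawing on `n` vertices has at most `3n` edges. -/
theorem card_edges_le (F : Finset (ι × ι)) (hF : ∀ p ∈ F, D.E p.1 p.2) :
    F.card ≤ 3 * D.V.card := by
  classical
  let F₀ := F.filter fun p => ∀ c, D.E p.1 c → ¬ D.slope p.1 p.2 < D.slope p.1 c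
  let F₁ := F.filter fun p => ∃ c m, m ≠ p.2 ∧ IsWedge D p.1 p.2 c m
  let F₂ := F.filter fun p => ∃ c, IsWedge D p.1 p.2 c p.2
  have hsub : F ⊆ F₀ ∪ (F₁ ∪ F₂) := by
    intro p hp
    simp only [F₀, F₁, F₂, Finset.mem_union, Finset.mem_filter, hp, true_and]
    by_cases h : ∀ c, D.E p.1 c → ¬ D.slope p.1 p.2 < D.slope p.1 c
    · exact Or.inl h
    · push Not at h
      obtain ⟨d, hd, hs⟩ := h
      obtain ⟨c, m, hw⟩ := exists_isWedge (hF p hp) hd hs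
      by_cases hm : m = p.2
      · exact Or.inr (Or.inr ⟨c, hm ▸ hw⟩)
      · exact Or.inr (Or.inl ⟨c, m, hm, hw⟩)
  have h₀ : F₀.card ≤ D.V.card := by
    refine Finset.card_le_card_of_forall_subsingleton (fun p a => p.1 = a) ?_ ?_
    · intro p hp
      exact ⟨p.1, D.mem_left (hF p (Finset.mem_filter.mp hp).1), rfl⟩
    · rintro a - p ⟨hp, rfl⟩ q ⟨hq, hqp⟩
      obtain ⟨hpF, hp⟩ := Finset.mem_filter.mp hp
      obtain ⟨hqF, hq⟩ := Finset.mem_filter.mp hq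
      have hqE := hF q hqF
      rw [hqp] at hq hqE
      have hpE := hF p hpF
      exact Prod.ext hqp.symm (eq_of_slope_eq hpE hqE
        (le_antisymm (not_lt.mp (hq _ hpE)) (not_lt.mp (hp _ hqE))))
  have h₁ : F₁.card ≤ D.V.card := by
    refine Finset.card_le_card_of_forall_subsingleton
      (fun p m => m ≠ p.2 ∧ ∃ c, IsWedge D p.1 p.2 c m) ?_ ?_
    · intro p hp
      obtain ⟨-, c, m, hm, hw⟩ := Finset.mem_filter.mp hp
      exact ⟨m, hw.mem, hm, c, hw⟩
    · rintro m - p ⟨-, hm, c, hw⟩ q ⟨-, hm', c', hw'⟩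
      have := hw.eq_of_ne hw' hm hm'
      exact Prod.ext this.1 this.2
  have h₂ : F₂.card ≤ D.V.card := by
    refine Finset.card_le_card_of_forall_subsingleton
      (fun p m => p.2 = m ∧ ∃ c, IsWedge D p.1 p.2 c m) ?_ ?_
    · intro p hp
      obtain ⟨-, c, hw⟩ := Finset.mem_filter.mp hp
      exact ⟨p.2, hw.mem, rfl, c, hw⟩
    · rintro m - ⟨a, b⟩ ⟨-, hb, c, hw⟩ ⟨a', b'⟩ ⟨-, hb', c', hw'⟩
      dsimp only at hb hb' hw hw'
      subst hb hb'
      rw [hw.eq_of_eq hw']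
  have h1 := Finset.card_le_card hsub
  have h2 := Finset.card_union_le F₀ (F₁ ∪ F₂)
  have h3 := Finset.card_union_le F₁ F₂
  omega

/-- The reflection of a drawing in the horizontal axis. -/
def reflect (D : XDrawing ι) : XDrawing ι where
  V := D.V
  X := D.X
  Y v := -D.Y v
  E := D.E
  mem_left := D.mem_left
  mem_right := D.mem_right
  lt := D.lt
  inj := D.inj
  avoid h hv h1 h2 e := D.avoid h hv h1 h2 (by linear_combination -e)
  disj x h h' h1 h2 h3 h4 e := D.disj x h h' h1 h2 h3 h4 (by linear_combination -e)

lemma not_all_edges_of_lt {a b c d d' z z' : ι} (hab : D.E a b) (hbc : D.E b c) (hac : D.E a c)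
    (had : D.E a d) (hcd : D.X c < D.X d) (hzc : D.E z c) (hza : D.X z < D.X a)
    (hbd : D.E b d') (hcd' : D.X c < D.X d') (hzb : D.E z' b) (hza' : D.X z' < D.X a)
    (habove : D.height a c (D.X b) < D.Y b) : False := by
  have Lab := D.lt hab
  have Lbc := D.lt hbc
  have Lac := D.lt hac
  have hne : ∀ {p q}, D.X p < D.X q → p ≠ q := fun h e => h.ne (by rw [e])
  have Rab := height_right Lab
  have Rbc := height_right Lbc
  have Rac := height_right Lac
  have Rzc := height_right (hza.trans Lac)
  have Rzb := height_right (hza'.trans Lab)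
  rcases lt_or_gt_of_ne (height_ne hzc (D.mem_left hac) hza Lac) with h | h
  · have h1 : ¬ D.height z c (D.X b) < D.Y b := fun h' =>
      hne hza (eq_of_swap hab hzc Lab le_rfl le_rfl hza.le Lbc.le
        (by rwa [height_left]) (by rwa [Rab])).1.symm
    have h1' : D.Y b < D.height z c (D.X b) := lt_of_le_of_ne (not_lt.mp h1)
      (height_ne hzc (D.mem_left hbc) (hza.trans Lab) Lbc)
    rcases lt_or_gt_of_ne (height_ne hbd (D.mem_right hbc) Lbc hcd') with h2 | h2
    · exact hne (hza.trans Lab) (eq_of_swap hbd hzc Lbc le_rfl hcd'.le (hza.trans Lab).le le_rfl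
        (by rwa [height_left]) (by rwa [Rzc])).1.symm
    · exact hne Lab (eq_of_swap hac hbd Lbc Lab.le le_rfl le_rfl hcd'.le
        (by rwa [height_left]) (by rwa [Rac])).1
  · have h1 : ¬ D.height a d (D.X c) < D.Y c := fun h' =>
      hne hza (eq_of_swap hzc had Lac hza.le le_rfl le_rfl hcd.le
        (by rwa [height_left]) (by rwa [Rzc])).1
    have h1' : D.Y c < D.height a d (D.X c) := lt_of_le_of_ne (not_lt.mp h1)
      (height_ne had (D.mem_right hbc) Lac hcd)
    have h2 : ¬ D.height a d (D.X b) < D.Y b := fun h' =>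
      hne Lab (eq_of_swap had hbc Lbc Lab.le hcd.le le_rfl le_rfl
        (by rwa [height_left]) (by rwa [Rbc])).1
    have h2' : D.Y b < D.height a d (D.X b) := lt_of_le_of_ne (not_lt.mp h2)
      (height_ne had (D.mem_left hbc) Lab (Lbc.trans hcd))
    rcases lt_or_gt_of_ne (height_ne hzb (D.mem_left hac) hza' Lab) with h3 | h3
    · exact hne hza' (eq_of_swap had hzb Lab le_rfl (Lbc.trans hcd).le hza'.le le_rfl
        (by rwa [height_left]) (by rwa [Rzb])).1.symm
    · exact hne hza' (eq_of_swap hzb hac Lab hza'.le le_rfl le_rfl Lbc.le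
        (by rwa [height_left]) (by rwa [Rzb])).1

/-- For three vertices `a`, `b`, `c` (in left-to-right order), the three edges between them, edges
from `a` and `b` to the right of `c`, and edges from the left of `a` to `b` and `c` cannot all be
present. -/
lemma not_all_edges {a b c d d' z z' : ι} (hab : D.E a b) (hbc : D.E b c) (hac : D.E a c)
    (had : D.E a d) (hcd : D.X c < D.X d) (hzc : D.E z c) (hza : D.X z < D.X a)
    (hbd : D.E b d') (hcd' : D.X c < D.X d') (hzb : D.E z' b) (hza' : D.X z' < D.X a) :
    False := by
  rcases lt_or_gt_of_ne (height_ne hac (D.mem_left hbc) (D.lt hab) (D.lt hbc)) with h | h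
  · refine not_all_edges_of_lt (D := D.reflect) hab hbc hac had hcd hzc hza hbd hcd' hzb hza' ?_
    have : D.reflect.height a c (D.X b) = -D.height a c (D.X b) := by
      simp only [height, slope, reflect]
      ring
    change D.reflect.height a c (D.X b) < -D.Y b
    linarith
  · exact not_all_edges_of_lt hab hbc hac had hcd hzc hza hbd hcd' hzb hza' h

end XDrawing

section Recurrence

open Classical in
/-- The sum of `P j` over all `j < n` satisfying `Q`. -/
def sumOn (n : ℕ) (P : ℕ → ℕ) (Q : ℕ → Prop) : ℕ :=
  ∑ j ∈ Finset.range n, if Q j then P j else 0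

variable {n : ℕ} {P : ℕ → ℕ} {E : ℕ → ℕ → Prop}

lemma sumOn_le_add {Q Q₁ Q₂ : ℕ → Prop} (h : ∀ j < n, Q j → Q₁ j ∨ Q₂ j) :
    sumOn n P Q ≤ sumOn n P Q₁ + sumOn n P Q₂ := by
  classical
  unfold sumOn
  rw [← Finset.sum_add_distrib]
  refine Finset.sum_le_sum fun j hj => ?_
  have := h j (Finset.mem_range.mp hj)
  split_ifs <;> first | omega | tauto

lemma sumOn_mono {Q Q' : ℕ → Prop} (h : ∀ j < n, Q j → Q' j) : sumOn n P Q ≤ sumOn n P Q' := by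
  classical
  refine Finset.sum_le_sum fun j hj => ?_
  have := h j (Finset.mem_range.mp hj)
  split_ifs <;> first | omega | tauto

lemma sumOn_eq_le (a : ℕ) : sumOn n P (· = a) ≤ P a := by
  classical
  refine (Finset.sum_le_sum (g := fun j => if j = a then P j else 0) fun j _ => ?_).trans ?_
  · split_ifs <;> omega
  · rw [Finset.sum_ite_eq']
    split_ifs <;> simp

lemma sumOn_eq_zero {Q : ℕ → Prop} (h : ∀ j < n, ¬ Q j) : sumOn n P Q = 0 := by
  classical
  exact Finset.sum_eq_zero fun j hj => if_neg (h j (Finset.mem_range.mp hj))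

lemma sumOn_le_add_of_eq {Q Q' : ℕ → Prop} (a : ℕ) (h : ∀ j < n, Q j → j = a ∨ Q' j) :
    sumOn n P Q ≤ P a + sumOn n P Q' :=
  (sumOn_le_add h).trans (Nat.add_le_add_right (sumOn_eq_le a) _)

/-- One plus the total weight of the vertices `j ≥ i` that can be entered from a vertex
before `i`. -/
def crossWeight (n : ℕ) (P : ℕ → ℕ) (E : ℕ → ℕ → Prop) (i : ℕ) : ℕ :=
  1 + sumOn n P fun j => i ≤ j ∧ ∃ k < i, E k j

lemma crossWeight_le (i : ℕ) : crossWeight n P E i ≤ P i + crossWeight n P E (i + 1) := by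
  have := sumOn_le_add_of_eq (n := n) (P := P) (Q := fun j => i ≤ j ∧ ∃ k < i, E k j)
    (Q' := fun j => i + 1 ≤ j ∧ ∃ k < i + 1, E k j) i (by
      rintro j - ⟨h, k, hk, hE⟩
      rcases h.eq_or_lt with h | h
      · exact Or.inl h.symm
      · exact Or.inr ⟨h, k, by omega, hE⟩)
  unfold crossWeight
  omega

lemma weight_le_crossWeight (hlt : ∀ i j, E i j → i < j) (hP : ∀ i, P i ≤ 1 + sumOn n P (E i))
    (i : ℕ) : P i ≤ crossWeight n P E (i + 1) :=
  (hP i).trans (Nat.add_le_add_left (sumOn_mono fun j _ h => ⟨hlt i j h, i, by omega, h⟩) _)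

/-- If every three consecutive vertices lack one of seven kinds of edges, the weights satisfy a
tribonacci inequality. -/
lemma crossWeight_le_tribonacci (hlt : ∀ i j, E i j → i < j)
    (hP : ∀ i, P i ≤ 1 + sumOn n P (E i)) {i : ℕ}
    (h : ¬ (E i (i + 1) ∧ E (i + 1) (i + 2) ∧ E i (i + 2) ∧ (∃ d, i + 2 < d ∧ E i d) ∧
      (∃ z < i, E z (i + 2)) ∧ (∃ d, i + 2 < d ∧ E (i + 1) d) ∧ ∃ z < i, E z (i + 1))) :
    crossWeight n P E i ≤ crossWeight n P E (i + 1) + crossWeight n P E (i + 2) +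
      crossWeight n P E (i + 3) + 1 := by
  have w0 := crossWeight_le (n := n) (P := P) (E := E) i
  have w1 := crossWeight_le (n := n) (P := P) (E := E) (i + 1)
  have p0 := weight_le_crossWeight hlt hP i
  have p1 := weight_le_crossWeight hlt hP (i + 1)
  have p2 := weight_le_crossWeight hlt hP (i + 2)
  simp only [add_assoc, Nat.reduceAdd] at w0 w1 p0 p1 p2
  by_cases h1 : E i (i + 1)
  swap
  · have : P i ≤ crossWeight n P E (i + 2) := by
      refine (hP i).trans (Nat.add_le_add_left (sumOn_mono fun j _ hj => ⟨?_, i, by omega, hj⟩) _)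
      have := hlt i j hj
      have : j ≠ i + 1 := by rintro rfl; exact h1 hj
      omega
    omega
  by_cases h2 : E (i + 1) (i + 2)
  swap
  · have : P (i + 1) ≤ crossWeight n P E (i + 3) := by
      refine (hP (i + 1)).trans
        (Nat.add_le_add_left (sumOn_mono fun j _ hj => ⟨?_, i + 1, by omega, hj⟩) _)
      have := hlt _ j hj
      have : j ≠ i + 2 := by rintro rfl; exact h2 hj
      omega
    omega
  by_cases h3 : E i (i + 2)
  swap
  · have : P i ≤ P (i + 1) + crossWeight n P E (i + 3) := by
      have := sumOn_le_add_of_eq (n := n) (P := P) (Q := E i)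
        (Q' := fun j => i + 3 ≤ j ∧ ∃ k < i + 3, E k j) (i + 1) (by
          intro j _ hj
          have := hlt i j hj
          have : j ≠ i + 2 := by rintro rfl; exact h3 hj
          by_cases hj1 : j = i + 1
          · exact Or.inl hj1
          · exact Or.inr ⟨by omega, i, by omega, hj⟩)
      have := hP i
      unfold crossWeight
      omega
    omega
  by_cases h4 : ∃ d, i + 2 < d ∧ E i d
  swap
  · have : P i ≤ 1 + (P (i + 1) + P (i + 2)) := by
      have e1 := sumOn_le_add_of_eq (n := n) (P := P) (Q := E i) (Q' := (· = i + 2)) (i + 1) (by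
          intro j _ hj
          have := hlt i j hj
          have : ¬ i + 2 < j := fun h => h4 ⟨j, h, hj⟩
          omega)
      have e2 := sumOn_eq_le (n := n) (P := P) (i + 2)
      have := hP i
      omega
    omega
  by_cases h5 : ∃ z < i, E z (i + 2)
  swap
  · have : crossWeight n P E i ≤ P i + (P (i + 1) + crossWeight n P E (i + 3)) := by
      have e1 := sumOn_le_add_of_eq (n := n) (P := P) (Q := fun j => i ≤ j ∧ ∃ k < i, E k j)
        (Q' := fun j => i + 1 ≤ j ∧ ∃ k < i, E k j) i (by
          rintro j - ⟨hj, hE⟩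
          by_cases hj1 : j = i
          · exact Or.inl hj1
          · exact Or.inr ⟨by omega, hE⟩)
      have e2 := sumOn_le_add_of_eq (n := n) (P := P) (Q := fun j => i + 1 ≤ j ∧ ∃ k < i, E k j)
        (Q' := fun j => i + 3 ≤ j ∧ ∃ k < i + 3, E k j) (i + 1) (by
          rintro j - ⟨hj, k, hk, hE⟩
          have : j ≠ i + 2 := by rintro rfl; exact h5 ⟨k, hk, hE⟩
          by_cases hj1 : j = i + 1
          · exact Or.inl hj1
          · exact Or.inr ⟨by omega, k, by omega, hE⟩)
      unfold crossWeight
      omega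
    omega
  by_cases h6 : ∃ d, i + 2 < d ∧ E (i + 1) d
  swap
  · have : P (i + 1) ≤ 1 + P (i + 2) := by
      refine (hP (i + 1)).trans (Nat.add_le_add_left ((sumOn_mono ?_).trans (sumOn_eq_le _)) _)
      intro j _ hj
      have := hlt _ j hj
      have : ¬ i + 2 < j := fun h => h6 ⟨j, h, hj⟩
      omega
    omega
  have h7 : ¬ ∃ z < i, E z (i + 1) := fun h7 => h ⟨h1, h2, h3, h4, h5, h6, h7⟩
  have : crossWeight n P E i ≤ P i + crossWeight n P E (i + 2) := by
    have e1 := sumOn_le_add_of_eq (n := n) (P := P) (Q := fun j => i ≤ j ∧ ∃ k < i, E k j)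
      (Q' := fun j => i + 2 ≤ j ∧ ∃ k < i + 2, E k j) i (by
        rintro j - ⟨hj, k, hk, hE⟩
        have : j ≠ i + 1 := by rintro rfl; exact h7 ⟨k, hk, hE⟩
        by_cases hj1 : j = i
        · exact Or.inl hj1
        · exact Or.inr ⟨by omega, k, by omega, hE⟩)
    unfold crossWeight
    omega
  omega

lemma crossWeight_eq_one {i : ℕ} (hi : n ≤ i) : crossWeight n P E i = 1 := by
  unfold crossWeight
  rw [sumOn_eq_zero fun j hj h => by omega]

lemma three_halves_le_of_tribonacci {α : ℝ} (h1 : 1 < α) (h3 : α ^ 3 = α ^ 2 + α + 1) :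
    3 / 2 ≤ α := by
  by_contra! h
  nlinarith [mul_pos (sub_pos.mpr h1) (sub_pos.mpr h), sq_nonneg α]

lemma crossWeight_le_pow {α : ℝ} (h1 : 1 < α) (h3 : α ^ 3 = α ^ 2 + α + 1)
    (hlt : ∀ i j, E i j → i < j) (hP : ∀ i, P i ≤ 1 + sumOn n P (E i))
    (h : ∀ i, i + 2 < n → ¬ (E i (i + 1) ∧ E (i + 1) (i + 2) ∧ E i (i + 2) ∧
      (∃ d, i + 2 < d ∧ E i d) ∧ (∃ z < i, E z (i + 2)) ∧ (∃ d, i + 2 < d ∧ E (i + 1) d) ∧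
      ∃ z < i, E z (i + 1))) (m i : ℕ) (hmi : i + m = n) :
    2 * (crossWeight n P E i : ℝ) + 1 ≤ 9 * α ^ m := by
  have step (i : ℕ) : crossWeight n P E i ≤ 2 * crossWeight n P E (i + 1) := by
    have := crossWeight_le (n := n) (P := P) (E := E) i
    have := weight_le_crossWeight hlt hP i
    omega
  induction m using Nat.strong_induction_on generalizing i with
  | _ m ih =>
    match m with
    | 0 =>
      rw [crossWeight_eq_one (by omega)]
      norm_num
    | 1 =>
      have s1 := step i
      rw [crossWeight_eq_one (show n ≤ i + 1 by omega)] at s1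
      have : (crossWeight n P E i : ℝ) ≤ 2 := by exact_mod_cast s1
      linarith
    | 2 =>
      have s1 := step i
      have s2 := step (i + 1)
      rw [crossWeight_eq_one (show n ≤ i + 1 + 1 by omega)] at s2
      have : (crossWeight n P E i : ℝ) ≤ 4 := by exact_mod_cast (by omega)
      nlinarith
    | m + 3 =>
      have a1 := ih (m + 2) (by omega) (i + 1) (by omega)
      have a2 := ih (m + 1) (by omega) (i + 2) (by omega)
      have a3 := ih m (by omega) (i + 3) (by omega)
      have a : (crossWeight n P E i : ℝ) ≤ crossWeight n P E (i + 1) + crossWeight n P E (i + 2) +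
          crossWeight n P E (i + 3) + 1 := by
        exact_mod_cast crossWeight_le_tribonacci hlt hP (h i (by omega))
      have e : α ^ (m + 3) = α ^ (m + 2) + α ^ (m + 1) + α ^ m := by
        linear_combination α ^ m * h3
      rw [e]
      linarith

lemma sum_weight_le {α : ℝ} (h1 : 1 < α) (h3 : α ^ 3 = α ^ 2 + α + 1)
    (hlt : ∀ i j, E i j → i < j) (hP : ∀ i, P i ≤ 1 + sumOn n P (E i))
    (h : ∀ i, i + 2 < n → ¬ (E i (i + 1) ∧ E (i + 1) (i + 2) ∧ E i (i + 2) ∧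
      (∃ d, i + 2 < d ∧ E i d) ∧ (∃ z < i, E z (i + 2)) ∧ (∃ d, i + 2 < d ∧ E (i + 1) d) ∧
      ∃ z < i, E z (i + 1))) :
    ((∑ i ∈ Finset.range n, P i : ℕ) : ℝ) ≤ 9 * α ^ n := by
  have geom (k : ℕ) : ∑ i ∈ Finset.range k, α ^ i ≤ 2 * α ^ k := by
    induction k with
    | zero => norm_num
    | succ k ih =>
      rw [Finset.sum_range_succ, pow_succ]
      nlinarith [three_halves_le_of_tribonacci h1 h3, pow_pos (zero_lt_one.trans h1) k]
  have hterm : ∀ i ∈ Finset.range n, (P i : ℝ) ≤ 9 / 2 * α ^ (n - 1 - i) := by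
    intro i hi
    have hi := Finset.mem_range.mp hi
    have a1 := crossWeight_le_pow h1 h3 hlt hP h (n - 1 - i) (i + 1) (by omega)
    have a2 : (P i : ℝ) ≤ crossWeight n P E (i + 1) := by
      exact_mod_cast weight_le_crossWeight hlt hP i
    linarith
  push_cast
  refine (Finset.sum_le_sum hterm).trans ?_
  rw [← Finset.mul_sum, Finset.sum_range_reflect (fun i => α ^ i)]
  linarith [geom n]

end Recurrence

/-- The chains of `R` starting at `a`. -/
def chainsFrom {ι : Type*} (R : ι → ι → Prop) (a : ι) : Set (List ι) :=
  {L | L.head? = some a ∧ L.IsChain R}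

lemma chainsFrom_subset {ι : Type*} {R : ι → ι → Prop} {a : ι} {s : Finset ℕ} {v : ℕ → ι}
    (h : ∀ b, R a b → ∃ j ∈ s, v j = b) :
    chainsFrom R a ⊆ {[a]} ∪ ⋃ j ∈ s, List.cons a '' chainsFrom R (v j) := by
  rintro L ⟨hL, hc⟩
  match L with
  | [] => simp at hL
  | [x] => left; simpa using hL
  | x :: y :: L =>
    obtain rfl : x = a := by simpa using hL
    rw [List.isChain_cons_cons] at hc
    obtain ⟨j, hj, rfl⟩ := h y hc.1
    right
    simp only [Set.mem_iUnion]
    exact ⟨j, hj, v j :: L, ⟨rfl, hc.2⟩, rfl⟩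

namespace XDrawing

variable {ι : Type*} (D : XDrawing ι)

lemma exists_enum (hne : D.V.Nonempty) : ∃ v : ℕ → ι,
    (∀ i j, i < j → j < D.V.card → D.X (v i) < D.X (v j)) ∧
    ∀ p ∈ D.V, ∃ i < D.V.card, v i = p := by
  classical
  obtain ⟨p₀, hp₀⟩ := hne
  have hinj : Set.InjOn D.X D.V := fun a ha b hb h => D.inj ha hb h
  have hcard : (D.V.image D.X).card = D.V.card := Finset.card_image_of_injOn hinj
  let f := (D.V.image D.X).orderEmbOfFin hcard
  have hf : ∀ i, ∃ p ∈ D.V, D.X p = f i := fun i =>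
    Finset.mem_image.mp ((D.V.image D.X).orderEmbOfFin_mem hcard i)
  choose g hgV hgX using hf
  refine ⟨fun i => if h : i < D.V.card then g ⟨i, h⟩ else p₀, ?_, ?_⟩
  · intro i j hij hj
    simp only [hj, hij.trans hj, dif_pos, hgX]
    exact f.strictMono hij
  · intro p hp
    have : D.X p ∈ Set.range f := by
      rw [Finset.range_orderEmbOfFin]
      exact Finset.mem_coe.mpr (Finset.mem_image_of_mem _ hp)
    obtain ⟨i, hi⟩ := this
    refine ⟨i, i.2, ?_⟩
    simp only [i.2, dif_pos]
    exact D.inj (hgV _) hp ((hgX i).trans hi)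

/-- The directed paths of a drawing on `n` vertices number at most `9 αⁿ`. -/
theorem ncard_chains_le {α : ℝ} (h1 : 1 < α) (h3 : α ^ 3 = α ^ 2 + α + 1) :
    {L : List ι | 2 ≤ L.length ∧ L.IsChain D.E}.Finite ∧
    (({L : List ι | 2 ≤ L.length ∧ L.IsChain D.E}.ncard : ℕ) : ℝ) ≤ 9 * α ^ D.V.card := by
  classical
  rcases D.V.eq_empty_or_nonempty with hV | hV
  · have : {L : List ι | 2 ≤ L.length ∧ L.IsChain D.E} = ∅ := by
      rw [Set.eq_empty_iff_forall_notMem]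
      rintro L ⟨hL, hc⟩
      match L with
      | [] => simp at hL
      | [x] => simp at hL
      | x :: y :: L =>
        have := D.mem_left (List.isChain_cons_cons.mp hc).1
        simp [hV] at this
    rw [this]
    refine ⟨Set.finite_empty, ?_⟩
    rw [Set.ncard_empty, Nat.cast_zero]
    positivity
  obtain ⟨v, hmono, hsurj⟩ := D.exists_enum hV
  set n := D.V.card
  let E : ℕ → ℕ → Prop := fun i j => i < n ∧ j < n ∧ D.E (v i) (v j)
  have hX : ∀ {i j}, i < n → j < n → D.X (v i) < D.X (v j) → i < j := by
    intro i j hi hj h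
    by_contra! hij
    rcases hij.eq_or_lt with rfl | hij
    · exact lt_irrefl _ h
    · exact lt_asymm h (hmono _ _ hij hi)
  have hlt : ∀ i j, E i j → i < j := fun i j h => hX h.1 h.2.1 (D.lt h.2.2)
  have hsub : ∀ i < n, chainsFrom D.E (v i) ⊆ {[v i]} ∪
      ⋃ j ∈ (Finset.range n).filter (E i), List.cons (v i) '' chainsFrom D.E (v j) := by
    intro i hi
    refine chainsFrom_subset fun b hb => ?_
    obtain ⟨j, hj, rfl⟩ := hsurj b (D.mem_right hb)
    exact ⟨j, by simp [E, hi, hj, hb], rfl⟩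
  have hfin : ∀ m i, i + m = n → 0 < m → (chainsFrom D.E (v i)).Finite := by
    intro m
    induction m using Nat.strong_induction_on with
    | _ m ih =>
      intro i hi hm
      refine Set.Finite.subset ((Set.finite_singleton _).union
        (Set.Finite.biUnion (Finset.finite_toSet _) fun j hj => Set.Finite.image _ ?_))
        (hsub i (by omega))
      have hE := (Finset.mem_filter.mp hj).2
      have := hlt i j hE
      have := hE.2.1
      exact ih (n - j) (by omega) j (by omega) (by omega)
  replace hfin : ∀ i < n, (chainsFrom D.E (v i)).Finite := fun i hi =>
    hfin (n - i) i (by omega) (by omega)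
  let P : ℕ → ℕ := fun i => if i < n then (chainsFrom D.E (v i)).ncard else 0
  have hP : ∀ i, P i ≤ 1 + sumOn n P (E i) := by
    intro i
    by_cases hi : i < n
    · simp only [P, if_pos hi]
      refine (Set.ncard_le_ncard (hsub i hi) ((Set.finite_singleton _).union
        (Set.Finite.biUnion (Finset.finite_toSet _) fun j hj => Set.Finite.image _
          (hfin j (Finset.mem_range.mp (Finset.mem_filter.mp hj).1))))).trans ?_
      refine (Set.ncard_union_le _ _).trans ?_
      rw [Set.ncard_singleton]
      refine Nat.add_le_add_left ((Finset.set_ncard_biUnion_le _ _).trans ?_) _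
      rw [Finset.sum_filter]
      refine Finset.sum_le_sum fun j hj => ?_
      have hj := Finset.mem_range.mp hj
      split_ifs
      · exact (Set.ncard_image_le (hfin j hj)).trans_eq (if_pos hj).symm
      · exact le_rfl
    · simp [P, hi]
  have hsum := sum_weight_le h1 h3 hlt hP (fun i hi => by
    rintro ⟨e1, e2, e3, ⟨d, hd, e4⟩, ⟨z, hz, e5⟩, ⟨d', hd', e6⟩, z', hz', e7⟩
    exact not_all_edges e1.2.2 e2.2.2 e3.2.2 e4.2.2 (hmono _ _ hd e4.2.1) e5.2.2
      (hmono _ _ hz e1.1) e6.2.2 (hmono _ _ hd' e6.2.1) e7.2.2 (hmono _ _ hz' e1.1))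
  have hcover : {L : List ι | 2 ≤ L.length ∧ L.IsChain D.E} ⊆
      ⋃ i ∈ Finset.range n, chainsFrom D.E (v i) := by
    rintro L ⟨hL, hc⟩
    match L with
    | [] => simp at hL
    | [x] => simp at hL
    | x :: y :: L =>
      obtain ⟨i, hi, rfl⟩ := hsurj x (D.mem_left (List.isChain_cons_cons.mp hc).1)
      simp only [Set.mem_iUnion]
      exact ⟨i, Finset.mem_range.mpr hi, rfl, hc⟩
  have hfin' : (⋃ i ∈ Finset.range n, chainsFrom D.E (v i)).Finite :=
    Set.Finite.biUnion (Finset.finite_toSet _) fun i hi => hfin i (by simpa using hi)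
  refine ⟨hfin'.subset hcover, le_trans ?_ hsum⟩
  refine Nat.cast_le.mpr ((Set.ncard_le_ncard hcover hfin').trans
    ((Finset.set_ncard_biUnion_le _ _).trans (Finset.sum_le_sum fun i hi => ?_)))
  simp [P, Finset.mem_range.mp hi]

end XDrawing

/-- The point of abscissa `x` on an edge, where abscissas are `p.1 + t * p.2`. -/
lemma mem_openSegment_of_abscissa {a b : Pt} {t x : ℝ} (h1 : a.1 + t * a.2 < x)
    (h2 : x < b.1 + t * b.2) {y : ℝ}
    (hy : y = a.2 + (b.2 - a.2) / ((b.1 + t * b.2) - (a.1 + t * a.2)) * (x - (a.1 + t * a.2))) :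
    (x - t * y, y) ∈ openSegment ℝ a b := by
  have hpos : 0 < (b.1 + t * b.2) - (a.1 + t * a.2) := by linarith
  rw [openSegment_eq_image]
  refine ⟨(x - (a.1 + t * a.2)) / ((b.1 + t * b.2) - (a.1 + t * a.2)),
    ⟨div_pos (by linarith) hpos, (div_lt_one hpos).mpr (by linarith)⟩, ?_⟩
  ext
  · simp only [Prod.fst_add, Prod.smul_fst, smul_eq_mul, hy]
    field_simp
    ring
  · simp only [Prod.snd_add, Prod.smul_snd, smul_eq_mul, hy]
    field_simp
    ring

/-- The drawing of `G` in which edges are directed according to the direction `(1, t)`, for `t`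
such that this direction separates the vertices. -/
def PSLG.toDrawing (G : PSLG) (t : ℝ)
    (ht : ∀ a ∈ G.V, ∀ b ∈ G.V, a.1 + t * a.2 = b.1 + t * b.2 → a = b) : XDrawing Pt where
  V := G.V
  X p := p.1 + t * p.2
  Y p := p.2
  E a b := s(a, b) ∈ G.E ∧ a.1 + t * a.2 < b.1 + t * b.2
  mem_left h := (G.valid.1 _ _ h.1).1
  mem_right h := (G.valid.1 _ _ h.1).2.1
  lt h := h.2
  inj ha hb h := ht _ ha _ hb h
  avoid := by
    intro a b v h hv h1 h2 e
    have := mem_openSegment_of_abscissa h1 h2 e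
    rw [add_sub_cancel_right] at this
    exact G.valid.2.1 a b h.1 v hv this
  disj := by
    intro a b c d x h h' h1 h2 h3 h4 e
    by_contra hne
    have hs : s(a, b) ≠ s(c, d) := by
      rw [Ne, Sym2.eq_iff]
      rintro (h5 | ⟨rfl, rfl⟩)
      · exact hne h5
      · exact lt_asymm h.2 h'.2
    have h6 := mem_openSegment_of_abscissa h1 h2 rfl
    have h7 := mem_openSegment_of_abscissa h3 h4 e
    have h8 := G.valid.2.2 a b c d h.1 h'.1 hs
    exact (Set.ext_iff.mp h8 _).mp ⟨h6, h7⟩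

lemma isOpen_setOf_monotoneInDir (L : List Pt) {f : ℝ → Pt} (hf : Continuous f) :
    IsOpen {s | MonotoneInDir (f s) L} := by
  unfold MonotoneInDir List.Chain'
  match L with
  | [] => simp
  | [a] => simp
  | a :: b :: L =>
    have ih := isOpen_setOf_monotoneInDir (b :: L) hf
    unfold MonotoneInDir List.Chain' at ih
    simp only [List.isChain_cons_cons]
    have hdot : Continuous fun s => dotp (b - a) (f s) := by
      unfold dotp
      fun_prop
    exact (isOpen_lt continuous_const hdot).inter ih

lemma exists_notMem_monotoneInDir {L : List Pt} {f : ℝ → Pt} (hf : Continuous f) {s : ℝ}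
    (hs : MonotoneInDir (f s) L) (B : Finset ℝ) : ∃ t ∉ B, MonotoneInDir (f t) L := by
  obtain ⟨t, ht, hmono⟩ := (B.countable_toSet.dense_compl ℝ).exists_mem_open
    (isOpen_setOf_monotoneInDir L hf) ⟨s, hs⟩
  exact ⟨t, ht, hmono⟩

/-- Up to reversal, a path that is monotone in some direction is monotone in the direction
`(1, t)` for some `t` avoiding a given finite set. -/
lemma exists_monotoneInDir_one {L : List Pt} {u : Pt} (hu : MonotoneInDir u L) (B : Finset ℝ) :
    ∃ t ∉ B, MonotoneInDir (1, t) L ∨ MonotoneInDir (1, t) L.reverse := by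
  obtain ⟨s, hs, hL⟩ := exists_notMem_monotoneInDir (f := fun s => (u.1 + s, u.2)) (s := 0)
    (L := L) (by fun_prop) (by simpa using hu) {-u.1}
  have hne : u.1 + s ≠ 0 := fun h => hs (by simp; linarith)
  have hcont : Continuous fun t : ℝ => ((1, t) : Pt) := by fun_prop
  have hdot : ∀ a b : Pt, dotp (b - a) (1, u.2 / (u.1 + s)) =
      dotp (b - a) (u.1 + s, u.2) / (u.1 + s) := by
    intro a b
    simp only [dotp]
    field_simp
  rcases lt_or_gt_of_ne hne with hneg | hpos
  · have h : MonotoneInDir (1, u.2 / (u.1 + s)) L.reverse := by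
      refine List.isChain_reverse.mpr (List.IsChain.imp (fun a b hab => ?_) hL)
      rw [hdot]
      refine div_pos_of_neg_of_neg ?_ hneg
      have : dotp (a - b) (u.1 + s, u.2) = -dotp (b - a) (u.1 + s, u.2) := by
        simp only [dotp, Prod.fst_sub, Prod.snd_sub]
        ring
      linarith
    obtain ⟨t, ht, hmono⟩ := exists_notMem_monotoneInDir hcont h B
    exact ⟨t, ht, Or.inr hmono⟩
  · have h : MonotoneInDir (1, u.2 / (u.1 + s)) L := by
      refine List.IsChain.imp (fun a b hab => ?_) hL
      rw [hdot]
      exact div_pos hab hpos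
    obtain ⟨t, ht, hmono⟩ := exists_notMem_monotoneInDir hcont h B
    exact ⟨t, ht, Or.inl hmono⟩

/-- The value of `t` for which the direction `(1, t)` is perpendicular to `ab`. -/
def criticalValue (a b : Pt) : ℝ := (b.1 - a.1) / (a.2 - b.2)

lemma criticalValue_comm (a b : Pt) : criticalValue a b = criticalValue b a := by
  rw [criticalValue, criticalValue, ← neg_sub b.1 a.1, ← neg_sub a.2 b.2, neg_div_neg_eq]

lemma eq_criticalValue {a b : Pt} {t : ℝ} (hab : a ≠ b) (h : a.1 + t * a.2 = b.1 + t * b.2) :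
    t = criticalValue a b := by
  have hne : a.2 - b.2 ≠ 0 := by
    intro h0
    have h2 : a.2 = b.2 := sub_eq_zero.mp h0
    rw [h2] at h
    exact hab (Prod.ext (by linarith) h2)
  rw [criticalValue, eq_div_iff hne]
  linarith

/-- If the two endpoints of an edge change their order between `t` and `t'`, then the critical
value of the edge lies between `t` and `t'`. -/
lemma criticalValue_between {a b : Pt} {t t' : ℝ} (h : a.1 + t * a.2 < b.1 + t * b.2)
    (h' : b.1 + t' * b.2 < a.1 + t' * a.2) :
    t < criticalValue a b ∧ criticalValue a b < t' ∨
      t' < criticalValue a b ∧ criticalValue a b < t := by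
  unfold criticalValue
  rcases lt_trichotomy (a.2 - b.2) 0 with hs | hs | hs
  · right
    rw [lt_div_iff_of_neg hs, div_lt_iff_of_neg hs]
    constructor <;> linarith
  · have : a.2 = b.2 := sub_eq_zero.mp hs
    rw [this] at h h'
    linarith
  · left
    rw [lt_div_iff₀ hs, div_lt_iff₀ hs]
    constructor <;> linarith

lemma lt_of_card_filter_eq {T : Finset ℝ} {a b : Pt} {t t' : ℝ} (hT : criticalValue a b ∈ T)
    (hcard : (T.filter (· < t)).card = (T.filter (· < t')).card)
    (hne : a.1 + t' * a.2 ≠ b.1 + t' * b.2) (h : a.1 + t * a.2 < b.1 + t * b.2) :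
    a.1 + t' * a.2 < b.1 + t' * b.2 := by
  have key : ∀ {x y c : ℝ}, c ∈ T → x < c → c < y →
      (T.filter (· < x)).card < (T.filter (· < y)).card := by
    intro x y c hc hx hy
    refine Finset.card_lt_card ((Finset.ssubset_iff_of_subset fun z hz => ?_).mpr ⟨c, ?_, ?_⟩)
    · simp only [Finset.mem_filter] at hz ⊢
      exact ⟨hz.1, by linarith⟩
    · simp [hc, hy]
    · simp [hx.le]
  by_contra hcon
  rcases criticalValue_between h (lt_of_le_of_ne (not_lt.mp hcon) hne.symm) with ⟨h1, h2⟩ | ⟨h1, h2⟩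
  · exact hcard.not_lt (key hT h1 h2)
  · exact hcard.not_gt (key hT h1 h2)

/-- At most `3n + 1` generic directions suffice to orient the edges of `G` in all ways that are
induced by generic directions. -/
lemma PSLG.exists_directions (G : PSLG) : ∃ (B : Finset ℝ) (m : ℕ) (τ : ℕ → ℝ),
    m ≤ 3 * G.V.card + 1 ∧
    (∀ t ∉ B, ∀ a ∈ G.V, ∀ b ∈ G.V, a.1 + t * a.2 = b.1 + t * b.2 → a = b) ∧
    (∀ k, τ k ∉ B) ∧
    ∀ t ∉ B, ∃ k < m, ∀ a b, s(a, b) ∈ G.E → a.1 + t * a.2 < b.1 + t * b.2 →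
      a.1 + τ k * a.2 < b.1 + τ k * b.2 := by
  classical
  let B : Finset ℝ := (G.V ×ˢ G.V).image fun p => criticalValue p.1 p.2
  have hB : ∀ t ∉ B, ∀ a ∈ G.V, ∀ b ∈ G.V, a.1 + t * a.2 = b.1 + t * b.2 → a = b := by
    intro t ht a ha b hb h
    by_contra hab
    exact ht (Finset.mem_image.mpr ⟨(a, b), by simp [ha, hb], (eq_criticalValue hab h).symm⟩)
  obtain ⟨t₀, ht₀⟩ := B.exists_notMem
  let F : Finset (Pt × Pt) := (G.V ×ˢ G.V).filter fun p =>
    (G.toDrawing t₀ (hB t₀ ht₀)).E p.1 p.2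
  let T : Finset ℝ := F.image fun p => criticalValue p.1 p.2
  have hTcard : T.card ≤ 3 * G.V.card := Finset.card_image_le.trans
    ((G.toDrawing t₀ (hB t₀ ht₀)).card_edges_le F fun p hp => (Finset.mem_filter.mp hp).2)
  have hT : ∀ a b, s(a, b) ∈ G.E → criticalValue a b ∈ T := by
    intro a b hab
    obtain ⟨ha, hb, hne⟩ := G.valid.1 a b hab
    rcases lt_or_gt_of_ne fun e => hne (hB t₀ ht₀ a ha b hb e) with h | h
    · exact Finset.mem_image.mpr ⟨(a, b),
        Finset.mem_filter.mpr ⟨Finset.mk_mem_product ha hb, hab, h⟩, rfl⟩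
    · rw [criticalValue_comm]
      rw [Sym2.eq_swap] at hab
      exact Finset.mem_image.mpr ⟨(b, a),
        Finset.mem_filter.mpr ⟨Finset.mk_mem_product hb ha, hab, h⟩, rfl⟩
  have hτ : ∀ k, ∃ s ∉ B, ∀ t ∉ B, (T.filter (· < t)).card = k → (T.filter (· < s)).card = k := by
    intro k
    by_cases h : ∃ s ∉ B, (T.filter (· < s)).card = k
    · obtain ⟨s, hs, hk⟩ := h
      exact ⟨s, hs, fun _ _ _ => hk⟩
    · exact ⟨t₀, ht₀, fun t ht hk => absurd ⟨t, ht, hk⟩ h⟩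
  choose τ hτB hτ using hτ
  refine ⟨B, T.card + 1, τ, by omega, hB, hτB, fun t ht => ⟨(T.filter (· < t)).card,
    Nat.lt_succ_of_le (Finset.card_filter_le _ _), fun a b hab h => ?_⟩⟩
  obtain ⟨ha, hb, hne⟩ := G.valid.1 a b hab
  exact lt_of_card_filter_eq (hT a b hab) (hτ _ t ht rfl).symm
    (fun e => hne (hB _ (hτB _) a ha b hb e)) h

lemma PSLG.isChain_of_monotoneInDir {G : PSLG} {L : List Pt} {t s : ℝ} (hL : IsPathIn G L)
    (hmono : MonotoneInDir (1, t) L)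
    (hs : ∀ a ∈ G.V, ∀ b ∈ G.V, a.1 + s * a.2 = b.1 + s * b.2 → a = b)
    (h : ∀ a b, s(a, b) ∈ G.E → a.1 + t * a.2 < b.1 + t * b.2 →
      a.1 + s * a.2 < b.1 + s * b.2) :
    L.IsChain (G.toDrawing s hs).E := by
  have h1 : L.IsChain fun a b => s(a, b) ∈ G.E := hL.2
  have h2 : L.IsChain fun a b => 0 < dotp (b - a) (1, t) := hmono
  rw [List.isChain_iff_getElem] at h1 h2 ⊢
  intro i hi
  refine ⟨h1 i hi, h _ _ (h1 i hi) ?_⟩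
  have := h2 i hi
  simp only [dotp, Prod.fst_sub, Prod.snd_sub] at this
  linarith

lemma IsPathIn.reverse {G : PSLG} {L : List Pt} (h : IsPathIn G L) : IsPathIn G L.reverse := by
  refine ⟨by simpa using h.1, List.isChain_reverse.mpr (List.IsChain.imp (fun a b hab => ?_) h.2)⟩
  rwa [Sym2.eq_swap]

lemma IsPathIn.nonempty {G : PSLG} {L : List Pt} (h : IsPathIn G L) : G.V.Nonempty := by
  obtain ⟨hL, hc⟩ := h
  match L with
  | [] => simp at hL
  | [x] => simp at hL
  | x :: y :: L => exact ⟨x, (G.valid.1 _ _ (List.isChain_cons_cons.mp hc).1).1⟩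

/-- every PSLG on `n` points has at most `C·n·αⁿ` monotone paths
(a path and its reversal counted once). -/
theorem monotone_upper_bound :
    ∃ C : ℝ, 0 < C ∧ ∀ α : ℝ, 1 < α → α ^ 3 = α ^ 2 + α + 1 →
      ∀ (n : ℕ) (G : PSLG), G.V.card = n →
        (monPathCount G : ℝ) ≤ C * n * α ^ n := by
  refine ⟨36, by norm_num, fun α h1 h3 n G hn => ?_⟩
  subst hn
  obtain ⟨B, m, τ, hm, hB, hτB, hτ⟩ := G.exists_directions
  let A : ℕ → Set (List Pt) := fun k =>
    {L | 2 ≤ L.length ∧ L.IsChain (G.toDrawing (τ k) (hB _ (hτB k))).E}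
  have hA : ∀ k, (A k).Finite ∧ ((A k).ncard : ℝ) ≤ 9 * α ^ G.V.card := fun k =>
    (G.toDrawing (τ k) (hB _ (hτB k))).ncard_chains_le h1 h3
  let pair : List Pt → Set (List Pt) := fun L => {L, L.reverse}
  have hcover : {P : Set (List Pt) | ∃ L, IsMonotonePath G L ∧ P = {L, L.reverse}} ⊆
      ⋃ k ∈ Finset.range m, pair '' A k := by
    rintro _ ⟨L, ⟨hL, u, -, hu⟩, rfl⟩
    obtain ⟨t, ht, hmono⟩ := exists_monotoneInDir_one hu B
    obtain ⟨k, hk, hord⟩ := hτ t ht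
    simp only [Set.mem_iUnion]
    refine ⟨k, Finset.mem_range.mpr hk, ?_⟩
    rcases hmono with hmono | hmono
    · exact ⟨L, ⟨hL.1, PSLG.isChain_of_monotoneInDir hL hmono _ hord⟩, rfl⟩
    · refine ⟨L.reverse, ⟨hL.reverse.1,
        PSLG.isChain_of_monotoneInDir hL.reverse hmono _ hord⟩, ?_⟩
      simp only [pair, List.reverse_reverse]
      exact Set.pair_comm _ _
  rcases G.V.eq_empty_or_nonempty with hV | hV
  · have hempty : {P : Set (List Pt) | ∃ L, IsMonotonePath G L ∧ P = {L, L.reverse}} = ∅ := by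
      rw [Set.eq_empty_iff_forall_notMem]
      rintro _ ⟨L, ⟨hL, -⟩, -⟩
      exact hL.nonempty.ne_empty hV
    rw [monPathCount, hempty, hV]
    simp
  have hcount : monPathCount G ≤ ∑ k ∈ Finset.range m, (A k).ncard :=
    (Set.ncard_le_ncard hcover (Set.Finite.biUnion (Finset.finite_toSet _)
      fun k _ => (hA k).1.image _)).trans ((Finset.set_ncard_biUnion_le _ _).trans
        (Finset.sum_le_sum fun k _ => Set.ncard_image_le (hA k).1))
  have hpow : 0 < α ^ G.V.card := pow_pos (zero_lt_one.trans h1) _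
  have hmR : (m : ℝ) ≤ 4 * G.V.card := by
    have := hV.card_pos
    exact_mod_cast (by omega : m ≤ 4 * G.V.card)
  calc (monPathCount G : ℝ) ≤ ∑ k ∈ Finset.range m, ((A k).ncard : ℝ) := by
        exact_mod_cast hcount
    _ ≤ ∑ _k ∈ Finset.range m, 9 * α ^ G.V.card := Finset.sum_le_sum fun k _ => (hA k).2
    _ = m * (9 * α ^ G.V.card) := by simp
    _ ≤ 4 * G.V.card * (9 * α ^ G.V.card) := by gcongr
    _ = 36 * G.V.card * α ^ G.V.card := by ring

end
end
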